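/- arXiv:1210.1152 — 3 statements merged into one kernel-verified Lean document; each statement's English description precedes it below -/
import Mathlib

section
/- Let n ≥ 1 and let r̄ = (r₁, …, r_n) be a weight vector with r_i > 0 for all i and ∑_{i=1}^n r_i = 1. Define the set of r̄-badly approximable vectors Bad^{r̄} = { x ∈ ℝⁿ : ∃ c > 0 such that for every q ∈ ℕ (q ≥ 1) and every p ∈ ℤⁿ there exists i with |q x_i − p_i| ≥ (c/q)^{r_i} }. Then for every nonempty open set U ⊆ ℝⁿ, the Hausdorff dimension of Bad^{r̄} ∩ U equals n. -/
open Set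

section
open MeasureTheory

/-- Mass distribution principle with a multiplicative constant. -/
theorem le_dimH_of_measure_le {X : Type*} [MetricSpace X] [MeasurableSpace X] [BorelSpace X]
    (μ : Measure X) {t : NNReal} {C δ : ℝ} (hC : 0 < C) (hδ : 0 < δ)
    (h : ∀ (s : Set X) (d : ℝ), 0 < d → d ≤ δ → (∀ x ∈ s, ∀ y ∈ s, dist x y ≤ d) →
      μ s ≤ ENNReal.ofReal (C * d ^ (t : ℝ)))
    {S : Set X} (hS : μ S ≠ 0) : (t : ENNReal) ≤ dimH S := by
  apply le_dimH_of_hausdorffMeasure_ne_zero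
  have hC0 : ENNReal.ofReal C ≠ 0 := by simpa using hC
  have key : (ENNReal.ofReal C)⁻¹ • μ ≤ Measure.hausdorffMeasure (t : ℝ) := by
    refine Measure.le_hausdorffMeasure _ _ (ENNReal.ofReal (δ / 2)) (by simpa using hδ) ?_
    intro s hs
    rw [Measure.smul_apply, smul_eq_mul, mul_comm, ← div_eq_mul_inv,
      ENNReal.div_le_iff' hC0 ENNReal.ofReal_ne_top]
    have hfin : Metric.ediam s ≠ ⊤ := ne_top_of_le_ne_top ENNReal.ofReal_ne_top hs
    have hle : Metric.diam s ≤ δ / 2 := ENNReal.toReal_le_of_le_ofReal (by positivity) hs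
    have hdist : ∀ x ∈ s, ∀ y ∈ s, dist x y ≤ Metric.diam s := fun x hx y hy =>
      Metric.dist_le_diam_of_mem (Metric.isBounded_iff_ediam_ne_top.2 hfin) hx hy
    have hev : ∀ᶠ d in nhdsWithin (Metric.diam s) (Ioi (Metric.diam s)),
        μ s ≤ ENNReal.ofReal (C * d ^ (t : ℝ)) := by
      filter_upwards [Ioo_mem_nhdsGT (show Metric.diam s < δ by linarith)] with d hd
      exact h s d (Metric.diam_nonneg.trans_lt hd.1) hd.2.le
        fun x hx y hy => (hdist x hx y hy).trans hd.1.le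
    have hcont : Continuous fun d : ℝ => ENNReal.ofReal (C * d ^ (t : ℝ)) :=
      ENNReal.continuous_ofReal.comp
        (continuous_const.mul (Real.continuous_rpow_const t.coe_nonneg))
    have hlim := ge_of_tendsto (hcont.continuousWithinAt.tendsto) hev
    rwa [ENNReal.ofReal_mul hC.le, ← ENNReal.ofReal_rpow_of_nonneg Metric.diam_nonneg t.coe_nonneg,
      Metric.diam, ENNReal.ofReal_toReal hfin] at hlim
  intro h0
  have h1 := key S
  rw [h0, Measure.smul_apply, smul_eq_mul, nonpos_iff_eq_zero, mul_eq_zero] at h1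
  rcases h1 with h1 | h1
  · simp at h1
  · exact hS h1
end

/-- Integer vectors `(q, p)` with `0 < q ≤ Q` and `p / q` in a small box lie in a
proper subspace. -/
theorem exists_hyperplane_of_small_box {n : ℕ} (hn : 0 < n) {Q : ℝ} (hQ : 0 ≤ Q)
    (a w : Fin n → ℝ)
    (h : ((n + 1).factorial : ℝ) * (Q ^ (n + 1) * ∏ i, w i) < 1) :
    ∃ A : Fin n → ℝ, A ≠ 0 ∧ ∃ b : ℝ, ∀ (q : ℕ) (p : Fin n → ℤ), 1 ≤ q → (q : ℝ) ≤ Q →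
      (∀ i, |(p i : ℝ) / q - a i| ≤ w i) → ∑ i, A i * ((p i : ℝ) / q) = b := by
  set S : Set (Fin (n + 1) → ℝ) := {v | ∃ (q : ℕ) (p : Fin n → ℤ), 1 ≤ q ∧ (q : ℝ) ≤ Q ∧
      (∀ i, |(p i : ℝ) / q - a i| ≤ w i) ∧ v = Fin.cons (q : ℝ) fun i => (p i : ℝ)} with hS
  have hdet : ∀ f : Fin (n + 1) → Fin (n + 1) → ℝ, (∀ l, f l ∈ S) →
      Matrix.det (Matrix.of f) = 0 := by
    intro f hf
    choose q p hq hqQ hp hv using hf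
    set P : Matrix (Fin (n + 1)) (Fin (n + 1)) ℤ :=
      Matrix.of fun l => Fin.cons (q l : ℤ) (p l) with hP
    have hfP : Matrix.of f = P.map (Int.castRingHom ℝ) := by
      ext l i
      simp only [Matrix.of_apply, Matrix.map_apply, hP, hv l]
      refine Fin.cases ?_ (fun i => ?_) i <;> simp
    set B : Matrix (Fin (n + 1)) (Fin (n + 1)) ℝ :=
      Matrix.of fun l => Fin.cons (q l : ℝ) (fun i => (p l i : ℝ) - a i * q l) with hB
    have hAB : Matrix.det (Matrix.of f) = Matrix.det B := by
      rw [← Matrix.det_transpose, ← Matrix.det_transpose B]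
      refine Matrix.det_eq_of_forall_row_eq_smul_add_const (Fin.cons 0 a) 0 (by simp) ?_
      intro i l
      simp only [Matrix.transpose_apply, Matrix.of_apply, hB, hv l]
      refine Fin.cases ?_ (fun i => ?_) i <;> simp
    have hBle : ∀ l i, |B l i| ≤ (Fin.cons Q (fun i => Q * w i) : Fin (n + 1) → ℝ) i := by
      intro l i
      have hq0 : (0 : ℝ) < q l := by exact_mod_cast hq l
      refine Fin.cases ?_ (fun i => ?_) i
      · simpa [hB] using hqQ l
      · have : (p l i : ℝ) - a i * q l = q l * ((p l i : ℝ) / q l - a i) := by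
          field_simp
        simp only [hB, Matrix.of_apply, Fin.cons_succ, this, abs_mul, Nat.abs_cast]
        exact mul_le_mul (hqQ l) (hp l i) (abs_nonneg _) hQ
    have hsmall : |Matrix.det B| < 1 := by
      refine lt_of_le_of_lt ?_ (?_ : ((n + 1).factorial : ℝ) *
        ∏ i, (Fin.cons Q (fun i => Q * w i) : Fin (n + 1) → ℝ) i < 1)
      · rw [Matrix.det_apply]
        refine (Finset.abs_sum_le_sum_abs _ _).trans ?_
        refine (Finset.sum_le_card_nsmul _ _
          (∏ i, (Fin.cons Q (fun i => Q * w i) : Fin (n + 1) → ℝ) i) ?_).trans ?_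
        · intro σ _
          rw [Units.smul_def, zsmul_eq_mul, abs_mul]
          have : |((Equiv.Perm.sign σ : ℤ) : ℝ)| = 1 := by
            rcases Int.units_eq_one_or (Equiv.Perm.sign σ) with h | h <;> simp [h]
          rw [this, one_mul, Finset.abs_prod]
          exact Finset.prod_le_prod (fun _ _ => abs_nonneg _) fun i _ => hBle _ _
        · simp [Fintype.card_perm]
      · rw [Fin.prod_univ_succ]
        simp only [Fin.cons_zero, Fin.cons_succ, Finset.prod_mul_distrib, Finset.prod_const,
          Finset.card_univ, Fintype.card_fin]
        rwa [← mul_assoc Q, ← pow_succ']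
    have hint : Matrix.det (Matrix.of f) = (P.det : ℝ) := by
      rw [hfP, ← RingHom.mapMatrix_apply, ← RingHom.map_det]; rfl
    rw [← hAB, hint] at hsmall
    have : |P.det| < 1 := by exact_mod_cast hsmall
    rw [hint, Int.abs_lt_one_iff.1 this]; simp
  have hspan : Submodule.span ℝ S < ⊤ := by
    rw [lt_top_iff_ne_top]
    intro htop
    obtain ⟨f, hf, -, hli⟩ := Submodule.exists_fun_fin_finrank_span_eq ℝ S
    have hfr : Module.finrank ℝ (Submodule.span ℝ S) = n + 1 := by
      rw [htop, finrank_top]; simp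
    have hli' := hli.comp (Fin.cast hfr.symm) (Fin.cast_injective _)
    have h0 := hdet (f ∘ Fin.cast hfr.symm) fun l => hf _
    have := Matrix.linearIndependent_rows_iff_isUnit.1
      (show LinearIndependent ℝ (Matrix.of (f ∘ Fin.cast hfr.symm)).row from hli')
    rw [Matrix.isUnit_iff_isUnit_det, h0] at this
    simp at this
  obtain ⟨φ, hφ, hker⟩ := Submodule.exists_le_ker_of_lt_top _ hspan
  have hzero : ∀ (q : ℕ) (p : Fin n → ℤ), 1 ≤ q → (q : ℝ) ≤ Q →
      (∀ i, |(p i : ℝ) / q - a i| ≤ w i) →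
      q * φ (Pi.single 0 1) + ∑ i : Fin n, (p i : ℝ) * φ (Pi.single i.succ 1) = 0 := by
    intro q p hq hqQ hp
    have : φ (Fin.cons (q : ℝ) fun i => (p i : ℝ)) = 0 :=
      hker (Submodule.subset_span ⟨q, p, hq, hqQ, hp, rfl⟩)
    rw [LinearMap.pi_apply_eq_sum_univ, Fin.sum_univ_succ] at this
    simpa [Pi.single_apply, eq_comm, ← Pi.single_apply] using this
  by_cases hA : (fun i : Fin n => φ (Pi.single i.succ 1)) = 0
  · refine ⟨fun _ => 1, fun h1 => one_ne_zero (congrFun h1 ⟨0, hn⟩), 0, ?_⟩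
    intro q p hq hqQ hp
    exfalso
    have h1 := hzero q p hq hqQ hp
    have h2 : ∀ i : Fin n, φ (Pi.single i.succ 1) = 0 := fun i => congrFun hA i
    simp only [h2, mul_zero, Finset.sum_const_zero, add_zero, mul_eq_zero] at h1
    rcases h1 with h1 | h1
    · have : q = 0 := by exact_mod_cast h1
      omega
    · apply hφ
      refine LinearMap.pi_ext' fun i => LinearMap.ext_ring ?_
      refine Fin.cases ?_ (fun i => ?_) i
      · simpa using h1
      · simpa using h2 i
  · refine ⟨_, hA, -φ (Pi.single 0 1), ?_⟩
    intro q p hq hqQ hp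
    have h1 := hzero q p hq hqQ hp
    have hq0 : (0 : ℝ) < q := by exact_mod_cast hq
    have h2 : ∑ i : Fin n, φ (Pi.single i.succ 1) * ((p i : ℝ) / q) =
        (∑ i : Fin n, (p i : ℝ) * φ (Pi.single i.succ 1)) / q := by
      rw [Finset.sum_div]
      exact Finset.sum_congr rfl fun i _ => by ring
    rw [h2, div_eq_iff hq0.ne']
    linarith

/-- Few cells of a fine grid in a box come close to a given hyperplane. -/
theorem two_mul_card_cells_near_hyperplane_le {ι : Type*} [Fintype ι] [DecidableEq ι]
    {A : ι → ℝ} (hA : A ≠ 0) (b : ℝ) (a σ ρ : ι → ℝ) {R : ℝ} (hσ : ∀ i, 0 < σ i)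
    (hρ : ∀ i, 0 < ρ i) (hρR : ∀ i, ρ i ≤ 1 / R) (hR : 8 * (Fintype.card ι : ℝ) + 3 ≤ R)
    (B : Finset (ι → ℕ)) (hB : B ⊆ Fintype.piFinset fun i => Finset.range ⌊1 / ρ i⌋₊)
    (hnear : ∀ j ∈ B, ∃ z : ι → ℝ, ∑ i, A i * z i = b ∧
      ∀ i, |a i + j i * (ρ i * σ i) - z i| ≤ 2 * σ i / R) :
    2 * B.card ≤ ∏ i, ⌊1 / ρ i⌋₊ := by
  have hR0 : 0 < R := by have : (0 : ℝ) ≤ Fintype.card ι := by positivity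
                         linarith
  obtain ⟨i₁, hi₁⟩ := Function.ne_iff.1 hA
  have : Nonempty ι := ⟨i₁⟩
  obtain ⟨i₀, -, hmax⟩ := Finset.exists_max_image Finset.univ (fun i => |A i| * σ i)
    Finset.univ_nonempty
  set T := |A i₀| * σ i₀ with hT
  have hTpos : 0 < T := (mul_pos (abs_pos.2 hi₁) (hσ i₁)).trans_le (hmax i₁ (Finset.mem_univ _))
  set D : ℝ := 4 * Fintype.card ι / (R * ρ i₀) with hD
  have hD0 : 0 ≤ D := by have := hρ i₀; positivity
  have hdiff : ∀ j ∈ B, ∀ j' ∈ B, (∀ i, i ≠ i₀ → j i = j' i) →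
      |(j i₀ : ℝ) - j' i₀| ≤ D := by
    intro j hj j' hj' heq
    obtain ⟨z, hz, hzn⟩ := hnear j hj
    obtain ⟨z', hz', hzn'⟩ := hnear j' hj'
    have e1 : A i₀ * ((j i₀ - j' i₀) * (ρ i₀ * σ i₀)) =
        ∑ i, A i * ((a i + j i * (ρ i * σ i) - z i) - (a i + j' i * (ρ i * σ i) - z' i)) := by
      have : ∑ i, A i * ((a i + j i * (ρ i * σ i) - z i) - (a i + j' i * (ρ i * σ i) - z' i)) =
          ∑ i, A i * ((j i - j' i) * (ρ i * σ i)) - ∑ i, A i * z i + ∑ i, A i * z' i := by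
        rw [← Finset.sum_sub_distrib, ← Finset.sum_add_distrib]
        exact Finset.sum_congr rfl fun i _ => by ring
      rw [this, hz, hz', Finset.sum_eq_single i₀]
      · ring
      · intro i _ hi
        rw [heq i hi]; ring
      · simp
    have e2 : |A i₀ * ((j i₀ - j' i₀) * (ρ i₀ * σ i₀))| ≤ Fintype.card ι * (4 * T / R) := by
      rw [e1]
      refine (Finset.abs_sum_le_sum_abs _ _).trans ?_
      refine (Finset.sum_le_card_nsmul _ _ (4 * T / R) fun i _ => ?_).trans (by simp)
      rw [abs_mul]
      calc |A i| * _ ≤ |A i| * (2 * σ i / R + 2 * σ i / R) :=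
            mul_le_mul_of_nonneg_left ((abs_sub _ _).trans (add_le_add (hzn i) (hzn' i)))
              (abs_nonneg _)
        _ = 4 * (|A i| * σ i) / R := by ring
        _ ≤ 4 * T / R := by
            have := hmax i (Finset.mem_univ _)
            gcongr
    rw [abs_mul, abs_mul, abs_of_pos (mul_pos (hρ i₀) (hσ i₀))] at e2
    have e3 : T * (|(j i₀ : ℝ) - j' i₀| * ρ i₀) ≤ T * (4 * Fintype.card ι / R) := by
      calc _ = |A i₀| * (|(j i₀ : ℝ) - j' i₀| * (ρ i₀ * σ i₀)) := by rw [hT]; ring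
        _ ≤ _ := e2
        _ = _ := by ring
    have e4 := le_of_mul_le_mul_left e3 hTpos
    rw [hD, ← div_div]
    exact (le_div_iff₀ (hρ i₀)).2 e4
  set K := ⌊D⌋₊ + 1 with hK
  have hKM : 2 * K ≤ ⌊1 / ρ i₀⌋₊ := by
    apply Nat.le_floor
    have h1 : (⌊D⌋₊ : ℝ) ≤ D := Nat.floor_le hD0
    have h2 : 2 * D + 2 ≤ 1 / ρ i₀ := by
      rw [hD, le_div_iff₀ (hρ i₀)]
      have h3 : (2 * (4 * Fintype.card ι / (R * ρ i₀)) + 2) * ρ i₀ =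
          8 * Fintype.card ι / R + 2 * ρ i₀ := by
        have := (hρ i₀).ne'
        field_simp; ring
      rw [h3]
      have h4 := hρR i₀
      calc 8 * Fintype.card ι / R + 2 * ρ i₀ ≤ 8 * Fintype.card ι / R + 2 * (1 / R) := by linarith
        _ = (8 * Fintype.card ι + 2) / R := by ring
        _ ≤ 1 := by rw [div_le_one hR0]; linarith
    push_cast [hK]
    linarith
  have hcard : B.card ≤ K * (B.image fun j => Function.update j i₀ 0).card := by
    refine Finset.card_le_mul_card_image B K ?_
    intro y _
    rcases (B.filter fun j => Function.update j i₀ 0 = y).eq_empty_or_nonempty with he | hne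
    · rw [he]; simp
    obtain ⟨j₀, hj₀, hmin⟩ := Finset.exists_min_image _ (fun j => j i₀) hne
    have hag : ∀ j ∈ B.filter fun j => Function.update j i₀ 0 = y, ∀ i, i ≠ i₀ → j i = y i := by
      intro j hj i hi
      rw [← (Finset.mem_filter.1 hj).2, Function.update_of_ne hi]
    have := Finset.card_le_card_of_injOn (s := B.filter fun j => Function.update j i₀ 0 = y)
      (t := Finset.Icc (j₀ i₀) (j₀ i₀ + ⌊D⌋₊)) (fun j => j i₀) ?_ ?_
    · refine this.trans ?_
      simp [hK]; omega
    · intro j hj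
      have h1 := hdiff j (Finset.mem_filter.1 hj).1 j₀ (Finset.mem_filter.1 hj₀).1
        fun i hi => (hag j hj i hi).trans (hag j₀ hj₀ i hi).symm
      have h2 := hmin j hj
      have h3 : j i₀ - j₀ i₀ ≤ ⌊D⌋₊ := by
        apply Nat.le_floor
        rw [Nat.cast_sub h2]
        exact (le_abs_self _).trans h1
      simp only [Finset.coe_Icc, Set.mem_Icc]
      omega
    · intro j hj j' hj' h1
      funext i
      by_cases hi : i = i₀
      · rw [hi]; exact h1
      · rw [hag j hj i hi, hag j' hj' i hi]
  have himage : (B.image fun j => Function.update j i₀ 0).card ≤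
      ∏ i ∈ Finset.univ.erase i₀, ⌊1 / ρ i⌋₊ := by
    have hsub : (B.image fun j => Function.update j i₀ 0) ⊆
        Fintype.piFinset fun i => if i = i₀ then {0} else Finset.range ⌊1 / ρ i⌋₊ := by
      intro y hy
      obtain ⟨j, hj, rfl⟩ := Finset.mem_image.1 hy
      rw [Fintype.mem_piFinset]
      intro i
      by_cases hi : i = i₀
      · subst hi; simp
      · simpa [hi] using Fintype.mem_piFinset.1 (hB hj) i
    refine (Finset.card_le_card hsub).trans ?_
    rw [Fintype.card_piFinset, ← Finset.mul_prod_erase _ _ (Finset.mem_univ i₀)]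
    simp only [if_true, Finset.card_singleton, one_mul]
    refine (Finset.prod_congr rfl fun i hi => ?_).le
    rw [if_neg (Finset.ne_of_mem_erase hi), Finset.card_range]
  rw [← Finset.mul_prod_erase _ _ (Finset.mem_univ i₀)]
  calc 2 * B.card ≤ 2 * (K * (B.image fun j => Function.update j i₀ 0).card) := by omega
    _ = (2 * K) * (B.image fun j => Function.update j i₀ 0).card := by ring
    _ ≤ _ := Nat.mul_le_mul hKM himage

section CellScheme
open MeasureTheory


variable {ι : Type*} {m : ℕ}

/-- The corner of the cell reached by following the word `w`, where `step k a d` is the corner of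
the `d`-th child of the cell of level `k` with corner `a`. -/
def cellCorner (step : ℕ → (ι → ℝ) → Fin m → ι → ℝ) (a₀ : ι → ℝ) :
    (k : ℕ) → (Fin k → Fin m) → ι → ℝ
  | 0, _ => a₀
  | k + 1, w => step k (cellCorner step a₀ k (Fin.init w)) (w (Fin.last k))

/-- Children of boxes with side lengths `σ k` are contained in their parent, have side lengths
`σ (k + 1)`, and do not overlap. -/
structure IsCellScheme (step : ℕ → (ι → ℝ) → Fin m → ι → ℝ) (σ : ℕ → ι → ℝ) : Prop where
  pos : ∀ k i, 0 < σ k i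
  le_step : ∀ k a d i, a i ≤ step k a d i
  step_le : ∀ k a d i, step k a d i + σ (k + 1) i ≤ a i + σ k i
  sep : ∀ k a d d', d ≠ d' → ∃ i, σ (k + 1) i ≤ |step k a d i - step k a d' i|

/-- The point of the limit set with address `ω`. -/
noncomputable def cellLimit (step : ℕ → (ι → ℝ) → Fin m → ι → ℝ) (a₀ : ι → ℝ)
    (ω : ℕ → Fin m) (i : ι) : ℝ :=
  ⨆ k, cellCorner step a₀ k (fun l => ω l) i

variable {step : ℕ → (ι → ℝ) → Fin m → ι → ℝ} {σ : ℕ → ι → ℝ}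

theorem cellCorner_succ (a₀ : ι → ℝ) (k : ℕ) (ω : ℕ → Fin m) :
    cellCorner step a₀ (k + 1) (fun l => ω l) =
      step k (cellCorner step a₀ k (fun l => ω l)) (ω k) := rfl

theorem IsCellScheme.monotone_corner (h : IsCellScheme step σ) (a₀ : ι → ℝ) (ω : ℕ → Fin m)
    (i : ι) : Monotone fun k => cellCorner step a₀ k (fun l => ω l) i :=
  monotone_nat_of_le_succ fun k => by rw [cellCorner_succ]; exact h.le_step _ _ _ _

theorem IsCellScheme.antitone_corner_add (h : IsCellScheme step σ) (a₀ : ι → ℝ) (ω : ℕ → Fin m)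
    (i : ι) : Antitone fun k => cellCorner step a₀ k (fun l => ω l) i + σ k i :=
  antitone_nat_of_succ_le fun k => by rw [cellCorner_succ]; exact h.step_le _ _ _ _

theorem IsCellScheme.corner_le_corner_add (h : IsCellScheme step σ) (a₀ : ι → ℝ) (ω : ℕ → Fin m)
    (i : ι) (k l : ℕ) : cellCorner step a₀ k (fun l => ω l) i ≤
      cellCorner step a₀ l (fun l => ω l) i + σ l i := by
  rcases le_total k l with hkl | hkl
  · have := h.monotone_corner a₀ ω i hkl
    have := h.pos l i
    simp only at *
    linarith
  · have := h.antitone_corner_add a₀ ω i hkl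
    have := h.pos k i
    simp only at *
    linarith

theorem IsCellScheme.corner_le_limit (h : IsCellScheme step σ) (a₀ : ι → ℝ) (ω : ℕ → Fin m)
    (k : ℕ) (i : ι) : cellCorner step a₀ k (fun l => ω l) i ≤ cellLimit step a₀ ω i :=
  le_ciSup (f := fun k => cellCorner step a₀ k (fun l => ω l) i)
    ⟨_, by rintro _ ⟨k, rfl⟩; exact h.corner_le_corner_add a₀ ω i k 0⟩ k

theorem IsCellScheme.limit_le_corner_add (h : IsCellScheme step σ) (a₀ : ι → ℝ) (ω : ℕ → Fin m)
    (k : ℕ) (i : ι) :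
    cellLimit step a₀ ω i ≤ cellCorner step a₀ k (fun l => ω l) i + σ k i :=
  ciSup_le fun l => h.corner_le_corner_add a₀ ω i l k

theorem IsCellScheme.corner_sep (h : IsCellScheme step σ) (a₀ : ι → ℝ) (k : ℕ)
    {w w' : Fin k → Fin m} (hne : w ≠ w') :
    ∃ i, σ k i ≤ |cellCorner step a₀ k w i - cellCorner step a₀ k w' i| := by
  induction k with
  | zero => exact absurd (Subsingleton.elim w w') hne
  | succ k ih =>
    by_cases hi : Fin.init w = Fin.init w'
    · have hl : w (Fin.last k) ≠ w' (Fin.last k) := fun hl => hne <| by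
        rw [← Fin.snoc_init_self w, ← Fin.snoc_init_self w', hi, hl]
      simp only [cellCorner, hi]
      exact h.sep _ _ _ _ hl
    · obtain ⟨i, h1⟩ := ih hi
      refine ⟨i, ?_⟩
      simp only [cellCorner]
      set a := cellCorner step a₀ k (Fin.init w)
      set a' := cellCorner step a₀ k (Fin.init w')
      have h2 := h.le_step k a (w (Fin.last k)) i
      have h3 := h.le_step k a' (w' (Fin.last k)) i
      have h4 := h.step_le k a (w (Fin.last k)) i
      have h5 := h.step_le k a' (w' (Fin.last k)) i
      rcases le_abs.1 h1 with h6 | h6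
      · exact le_abs.2 (Or.inl (by linarith))
      · exact le_abs.2 (Or.inr (by linarith))

theorem measurable_cellLimit (a₀ : ι → ℝ) : Measurable (cellLimit step a₀) := by
  refine measurable_pi_iff.2 fun i => Measurable.iSup fun k => ?_
  have h1 : Measurable fun w : Fin k → Fin m => cellCorner step a₀ k w i := Measurable.of_discrete
  have h2 : Measurable fun (ω : ℕ → Fin m) (l : Fin k) => ω l :=
    measurable_pi_iff.2 fun l => measurable_pi_apply _
  exact h1.comp h2

/-- A set of diameter `d` meets few cells of a level on which all sides are at most `d`. -/
theorem IsCellScheme.card_le [Fintype ι] (h : IsCellScheme step σ) (a₀ : ι → ℝ) (k : ℕ) {d : ℝ}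
    (hd : ∀ i, σ k i ≤ d) (y : ι → ℝ) (W : Finset (Fin k → Fin m))
    (hW : ∀ w ∈ W, ∀ i, cellCorner step a₀ k w i ≤ y i + d ∧
      y i - d ≤ cellCorner step a₀ k w i + σ k i) :
    (W.card : ℝ) ≤ ∏ i, 5 * d / σ k i := by
  classical
  have hinj : W.card ≤ (Fintype.piFinset fun i =>
      Finset.Icc ⌊(y i - d) / σ k i - 1⌋ ⌊(y i + d) / σ k i⌋).card := by
    refine Finset.card_le_card_of_injOn (fun w i => ⌊cellCorner step a₀ k w i / σ k i⌋) ?_ ?_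
    · intro w hw
      simp only [Finset.mem_coe, Fintype.mem_piFinset, Finset.mem_Icc]
      intro i
      have hp := h.pos k i
      obtain ⟨h1, h2⟩ := hW w hw i
      refine ⟨Int.floor_le_floor ?_, Int.floor_le_floor ?_⟩
      · rw [sub_le_iff_le_add, div_add_one hp.ne']
        gcongr
      · gcongr
    · intro w _ w' _ heq
      by_contra hne
      obtain ⟨i, hi⟩ := h.corner_sep a₀ k hne
      have h1 := Int.abs_sub_lt_one_of_floor_eq_floor (congrFun heq i)
      have hp := h.pos k i
      rw [← sub_div, abs_div, abs_of_pos hp, div_lt_one hp] at h1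
      linarith
  calc (W.card : ℝ) ≤ _ := Nat.cast_le.2 hinj
    _ ≤ _ := by
      rw [Fintype.card_piFinset, Nat.cast_prod]
      refine Finset.prod_le_prod (fun _ _ => Nat.cast_nonneg _) fun i _ => ?_
      have hp := h.pos k i
      have hd1 : 1 ≤ d / σ k i := (one_le_div hp).2 (hd i)
      have h1 : ⌊(y i - d) / σ k i - 1⌋ ≤ ⌊(y i + d) / σ k i⌋ + 1 := by
        refine (Int.floor_le_floor ?_).trans (Int.le_add_one le_rfl)
        have : (y i - d) / σ k i ≤ (y i + d) / σ k i := by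
          gcongr; linarith [hd i]
        linarith
      have h2 : ((⌊(y i + d) / σ k i⌋ + 1 - ⌊(y i - d) / σ k i - 1⌋ : ℤ).toNat : ℝ) =
          ((⌊(y i + d) / σ k i⌋ + 1 - ⌊(y i - d) / σ k i - 1⌋ : ℤ) : ℝ) := by
        exact_mod_cast Int.toNat_of_nonneg (by linarith)
      rw [Int.card_Icc, h2]
      push_cast
      have h3 := Int.floor_le ((y i + d) / σ k i)
      have h4 := Int.lt_floor_add_one ((y i - d) / σ k i - 1)
      have h5 : (y i + d) / σ k i - (y i - d) / σ k i = 2 * (d / σ k i) := by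
        rw [← sub_div]; ring
      have h6 : 5 * d / σ k i = 5 * (d / σ k i) := by ring
      rw [h6]
      linarith

/-- The Bernoulli measure on words with equidistributed letters. -/
noncomputable def wordMeasure (m : ℕ) [NeZero m] : Measure (ℕ → Fin m) :=
  Measure.infinitePi fun _ => (PMF.uniformOfFintype (Fin m)).toMeasure

instance (m : ℕ) [NeZero m] : IsProbabilityMeasure (wordMeasure m) := by
  unfold wordMeasure; infer_instance

theorem wordMeasure_prefix [NeZero m] (k : ℕ) (w : Fin k → Fin m) :
    wordMeasure m {ω | (fun l : Fin k => ω l) = w} = ((m : ENNReal)⁻¹) ^ k := by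
  have h1 : {ω : ℕ → Fin m | (fun l : Fin k => ω l) = w} =
      Set.pi (Finset.range k) fun l => if h : l < k then {w ⟨l, h⟩} else univ := by
    ext ω
    simp only [mem_ofPred_eq, Set.mem_pi, Finset.coe_range, mem_Iio, funext_iff]
    constructor
    · intro h l hl
      simpa [hl] using h ⟨l, hl⟩
    · intro h l
      simpa using h l l.2
  rw [h1, wordMeasure, Measure.infinitePi_pi _ fun _ _ => MeasurableSet.of_discrete]
  rw [Finset.prod_congr rfl (g := fun _ => (m : ENNReal)⁻¹), Finset.prod_const, Finset.card_range]
  intro l hl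
  rw [dif_pos (Finset.mem_range.1 hl), PMF.toMeasure_apply_singleton _ _ (measurableSet_singleton _)]
  simp

theorem IsCellScheme.measure_le [Fintype ι] [NeZero m] (h : IsCellScheme step σ) (a₀ : ι → ℝ)
    (k : ℕ) {d : ℝ} (hd : ∀ i, σ k i ≤ d) (s : Set (ι → ℝ))
    (hs : ∀ x ∈ s, ∀ y ∈ s, ∀ i, |x i - y i| ≤ d) :
    wordMeasure m (cellLimit step a₀ ⁻¹' s) ≤
      ENNReal.ofReal ((∏ i, 5 * d / σ k i) * ((m : ℝ)⁻¹) ^ k) := by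
  classical
  rcases s.eq_empty_or_nonempty with rfl | ⟨y, hy⟩
  · simp
  set W : Finset (Fin k → Fin m) := Finset.univ.filter fun w => ∀ i,
    cellCorner step a₀ k w i ≤ y i + d ∧ y i - d ≤ cellCorner step a₀ k w i + σ k i with hW
  have hcard := h.card_le a₀ k hd y W fun w hw => (Finset.mem_filter.1 hw).2
  have hsub : cellLimit step a₀ ⁻¹' s ⊆
      ⋃ w ∈ W, {ω | (fun l : Fin k => ω l) = w} := by
    intro ω hω
    simp only [mem_iUnion, mem_ofPred_eq, exists_prop, exists_eq_right', hW, Finset.mem_filter,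
      Finset.mem_univ, true_and]
    intro i
    have h1 := h.corner_le_limit a₀ ω k i
    have h2 := h.limit_le_corner_add a₀ ω k i
    have h3 := abs_le.1 (hs _ hω _ hy i)
    constructor <;> linarith
  refine (measure_mono hsub).trans ((measure_biUnion_finset_le _ _).trans ?_)
  simp only [wordMeasure_prefix, Finset.sum_const, nsmul_eq_mul]
  have hm : (0 : ℝ) < m := by exact_mod_cast Nat.pos_of_ne_zero (NeZero.ne m)
  have hm2 : ((m : ENNReal)⁻¹) ^ k = ENNReal.ofReal (((m : ℝ)⁻¹) ^ k) := by
    rw [ENNReal.ofReal_pow (by positivity), ENNReal.ofReal_inv_of_pos hm, ENNReal.ofReal_natCast]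
  rw [hm2, ← ENNReal.ofReal_natCast, ← ENNReal.ofReal_mul (by positivity)]
  exact ENNReal.ofReal_le_ofReal (mul_le_mul_of_nonneg_right hcard (by positivity))

/-- If the cells shrink by factors `ρ i` and a proportion of at least `η` (in volume) is kept at
each level, with `η⁻¹ ≤ R ^ ε`, then the limit set has dimension at least `card ι - ε`. -/
theorem IsCellScheme.le_dimH [Fintype ι] [NeZero m] {s R η ε : ℝ} {ρ : ι → ℝ}
    (h : IsCellScheme step fun k i => s * ρ i ^ k) (a₀ : ι → ℝ) (hs : 0 < s) (hR : 1 < R)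
    (hε : 0 ≤ ε) (hρ : ∀ i, 0 < ρ i) (hρR : ∀ i, ρ i ≤ 1 / R)
    (hm : η ≤ m * ∏ i, ρ i) (hηR : 1 ≤ η * R ^ ε) {t : NNReal}
    (ht : (t : ℝ) + ε = Fintype.card ι) {S : Set (ι → ℝ)} (hS : ∀ ω, cellLimit step a₀ ω ∈ S) :
    (t : ENNReal) ≤ dimH S := by
  have hR0 : 0 < R := by linarith
  have hm0 : (0 : ℝ) < m := by exact_mod_cast Nat.pos_of_ne_zero (NeZero.ne m)
  set N := Fintype.card ι with hN
  refine le_dimH_of_measure_le ((wordMeasure m).map (cellLimit step a₀))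
    (C := (5 / s) ^ N * (R * s) ^ ε) (δ := s) (by positivity) hs ?_ ?_
  swap
  · have h1 := Measure.le_map_apply (μ := wordMeasure m)
      (measurable_cellLimit (step := step) a₀).aemeasurable S
    rw [eq_univ_of_forall (s := cellLimit step a₀ ⁻¹' S) hS, measure_univ] at h1
    intro h0
    rw [h0] at h1
    simp at h1
  intro A d hd hds hA
  have hAcl : ∀ x ∈ closure A, ∀ y ∈ closure A, ∀ i, |x i - y i| ≤ d := by
    intro x hx y hy i
    have hb : Bornology.IsBounded A := Metric.isBounded_iff.2 ⟨d, fun x hx y hy => hA x hx y hy⟩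
    have h1 := Metric.dist_le_diam_of_mem hb.closure hx hy
    rw [Metric.diam_closure] at h1
    have h2 := Metric.diam_le_of_forall_dist_le hd.le hA
    have h3 := dist_le_pi_dist x y i
    rw [Real.dist_eq] at h3
    linarith
  have hex : ∃ k : ℕ, s * (1 / R) ^ k ≤ d := by
    obtain ⟨k, hk⟩ := exists_pow_lt_of_lt_one (show 0 < d / s by positivity)
      ((div_lt_one hR0).2 hR)
    exact ⟨k, by rw [lt_div_iff₀ hs] at hk; linarith⟩
  classical
  set k := Nat.find hex with hk
  have hk1 : s * (1 / R) ^ k ≤ d := Nat.find_spec hex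
  have hk2 : R ^ k ≤ R * s / d := by
    rcases Nat.eq_zero_or_pos k with h0 | h0
    · rw [h0, pow_zero, le_div_iff₀ hd]; nlinarith
    · have h1 := Nat.find_min hex (show k - 1 < k by omega)
      push Not at h1
      rw [one_div, inv_pow, ← div_eq_mul_inv, lt_div_iff₀ (by positivity)] at h1
      rw [le_div_iff₀ hd, ← Nat.sub_add_cancel h0, pow_succ']
      nlinarith
  have hσd : ∀ i, s * ρ i ^ k ≤ d := fun i =>
    (mul_le_mul_of_nonneg_left (pow_le_pow_left₀ (hρ i).le (hρR i) k) hs.le).trans hk1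
  calc ((wordMeasure m).map (cellLimit step a₀)) A
      ≤ ((wordMeasure m).map (cellLimit step a₀)) (closure A) := measure_mono subset_closure
    _ = wordMeasure m (cellLimit step a₀ ⁻¹' closure A) :=
        Measure.map_apply (measurable_cellLimit _) isClosed_closure.measurableSet
    _ ≤ _ := h.measure_le a₀ k hσd _ hAcl
    _ ≤ _ := ENNReal.ofReal_le_ofReal ?_
  have hP : 0 < ∏ i, ρ i := Finset.prod_pos fun i _ => hρ i
  have e1 : (∏ i, 5 * d / (s * ρ i ^ k)) * ((m : ℝ)⁻¹) ^ k =
      (5 / s) ^ N * d ^ N * ((m * ∏ i, ρ i)⁻¹) ^ k := by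
    have : ∀ i, 5 * d / (s * ρ i ^ k) = (5 / s * d) * ((ρ i)⁻¹) ^ k := fun i => by
      rw [inv_pow, div_mul_eq_mul_div, ← div_eq_mul_inv, div_div]
    simp only [this, Finset.prod_mul_distrib, Finset.prod_const, Finset.card_univ,
      Finset.prod_pow, Finset.prod_inv_distrib, ← hN]
    rw [mul_inv, mul_pow]; ring
  have e2 : (m * ∏ i, ρ i)⁻¹ ≤ R ^ ε := by
    rw [inv_le_iff_one_le_mul₀ (by positivity)]
    calc 1 ≤ η * R ^ ε := hηR
      _ ≤ (m * ∏ i, ρ i) * R ^ ε := by gcongr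
      _ = _ := mul_comm _ _
  have e3 : ((m * ∏ i, ρ i)⁻¹) ^ k ≤ (R * s) ^ ε / d ^ ε := by
    calc _ ≤ (R ^ ε) ^ k := pow_le_pow_left₀ (by positivity) e2 k
      _ = (R ^ k) ^ ε := by
        rw [← Real.rpow_natCast, ← Real.rpow_mul hR0.le, mul_comm, Real.rpow_mul hR0.le,
          Real.rpow_natCast]
      _ ≤ (R * s / d) ^ ε := by gcongr
      _ = _ := Real.div_rpow (by positivity) hd.le _
  have e4 : d ^ (t : ℝ) = d ^ N / d ^ ε := by
    rw [← Real.rpow_natCast, ← Real.rpow_sub hd, ← ht]; simp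
  rw [e1, e4]
  calc _ ≤ (5 / s) ^ N * d ^ N * ((R * s) ^ ε / d ^ ε) := by gcongr
    _ = _ := by ring

end CellScheme

/-- Inside any box of a given shape one can select `m` grid cells which stay away from all
rational points of small denominator. -/
theorem exists_cells_avoiding_rationals {n m : ℕ} (hn : 0 < n) {R Q : ℝ} (hQ : 0 ≤ Q)
    (hR : 8 * (n : ℝ) + 3 ≤ R) (a σ ρ : Fin n → ℝ) (hσ : ∀ i, 0 < σ i) (hρ : ∀ i, 0 < ρ i)
    (hρR : ∀ i, ρ i ≤ 1 / R) (hm : 2 * m ≤ (∏ i, ⌊1 / ρ i⌋₊) + 1)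
    (hvol : ((n + 1).factorial : ℝ) * (Q ^ (n + 1) * ∏ i, 2 * σ i) < 1) :
    ∃ e : Fin m → Fin n → ℕ, Function.Injective e ∧ ∀ d, (∀ i, e d i < ⌊1 / ρ i⌋₊) ∧
      ∀ (q : ℕ) (p : Fin n → ℤ), 1 ≤ q → (q : ℝ) ≤ Q →
        ∃ i, 2 * σ i / R < |a i + e d i * (ρ i * σ i) - (p i : ℝ) / q| := by
  classical
  have hR3 : 3 ≤ R := by have : (0 : ℝ) ≤ n := by positivity
                         linarith
  obtain ⟨A, hA, b, hAb⟩ := exists_hyperplane_of_small_box hn hQ a (fun i => 2 * σ i) hvol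
  set F : Finset (Fin n → ℕ) := Fintype.piFinset fun i => Finset.range ⌊1 / ρ i⌋₊ with hF
  set good : (Fin n → ℕ) → Prop := fun j => ∀ (q : ℕ) (p : Fin n → ℤ), 1 ≤ q → (q : ℝ) ≤ Q →
    ∃ i, 2 * σ i / R < |a i + j i * (ρ i * σ i) - (p i : ℝ) / q| with hgood
  have hbad : 2 * (F.filter fun j => ¬ good j).card ≤ ∏ i, ⌊1 / ρ i⌋₊ := by
    refine two_mul_card_cells_near_hyperplane_le hA b a σ ρ hσ hρ hρR (by simpa using hR) _
      (Finset.filter_subset _ _) ?_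
    intro j hj
    obtain ⟨hjF, hjb⟩ := Finset.mem_filter.1 hj
    simp only [hgood] at hjb
    push Not at hjb
    obtain ⟨q, p, hq, hqQ, hp⟩ := hjb
    refine ⟨fun i => (p i : ℝ) / q, hAb q p hq hqQ fun i => ?_, hp⟩
    have h1 := abs_le.1 (hp i)
    have h2 : (j i : ℝ) * (ρ i * σ i) ≤ σ i := by
      have h3 : j i < ⌊1 / ρ i⌋₊ := by simpa using Fintype.mem_piFinset.1 hjF i
      have h4 : (j i : ℝ) ≤ 1 / ρ i := (Nat.cast_le.2 h3.le).trans
        (Nat.floor_le (one_div_nonneg.2 (hρ i).le))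
      rw [le_div_iff₀ (hρ i)] at h4
      have := hσ i
      nlinarith
    have h5 : 2 * σ i / R ≤ σ i := by
      rw [div_le_iff₀ (by linarith)]
      have := hσ i
      nlinarith
    have h6 : 0 ≤ (j i : ℝ) * (ρ i * σ i) := by have := hσ i; have := hρ i; positivity
    have := hσ i
    rw [abs_le]
    constructor <;> linarith
  have hcard : m ≤ (F.filter good).card := by
    have h1 := Finset.card_filter_add_card_filter_not (s := F) good
    have h2 : F.card = ∏ i, ⌊1 / ρ i⌋₊ := by simp [hF]
    omega
  obtain ⟨e⟩ := Function.Embedding.nonempty_of_card_le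
    (α := Fin m) (β := (F.filter good : Finset (Fin n → ℕ))) (by simpa using hcard)
  refine ⟨fun d => (e d : Fin n → ℕ), Subtype.val_injective.comp e.injective, fun d => ?_⟩
  obtain ⟨h1, h2⟩ := Finset.mem_filter.1 (e d).2
  exact ⟨fun i => by simpa using Fintype.mem_piFinset.1 h1 i, h2⟩

/-- A point staying at distance `≫ R ^ (-k * (1 + r i))` (in some coordinate `i`) from the rational
points with denominator at most `R ^ k`, for all `k`, is badly approximable. -/
theorem exists_badly_approximable_constant {n : ℕ} {r : Fin n → ℝ} (hr : ∀ i, 0 < r i)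
    (hr1 : ∀ i, r i ≤ 1) {R s : ℝ} (hR : 1 < R) (hs : 0 < s) :
    ∃ c : ℝ, 0 < c ∧ ∀ x : Fin n → ℝ,
      (∀ (k q : ℕ) (p : Fin n → ℤ), 1 ≤ q → (q : ℝ) ≤ R ^ k →
        ∃ i, s * (R ^ (-(1 + r i))) ^ k / R ≤ |x i - (p i : ℝ) / q|) →
      ∀ q : ℕ, 1 ≤ q → ∀ p : Fin n → ℤ,
        ∃ i, (c / (q : ℝ)) ^ r i ≤ |(q : ℝ) * x i - (p i : ℝ)| := by
  have hR0 : 0 < R := by linarith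
  have hev : ∀ᶠ c in nhdsWithin (0 : ℝ) (Ioi 0), ∀ i, c ^ r i ≤ s / R ^ 3 := by
    refine Filter.eventually_all.2 fun i => ?_
    have h1 : Filter.Tendsto (fun c : ℝ => c ^ r i) (nhdsWithin 0 (Ioi 0)) (nhds 0) := by
      have := (Real.continuous_rpow_const (hr i).le).tendsto 0
      rw [Real.zero_rpow (hr i).ne'] at this
      exact this.mono_left nhdsWithin_le_nhds
    exact h1.eventually_le_const (by positivity)
  obtain ⟨c, hc, hc0⟩ := (hev.and self_mem_nhdsWithin).exists
  refine ⟨c, hc0, fun x hx q hq p => ?_⟩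
  have hc0 : 0 < c := hc0
  have hq1 : (1 : ℝ) ≤ q := by exact_mod_cast hq
  have hq0 : (0 : ℝ) < q := by linarith
  obtain ⟨k, hk1, hk2⟩ : ∃ k : ℕ, (q : ℝ) ≤ R ^ k ∧ R ^ k ≤ R * q := by
    obtain ⟨k, h1, h2⟩ := exists_nat_pow_near hq1 hR
    exact ⟨k + 1, h2.le, by rw [pow_succ']; gcongr⟩
  obtain ⟨i, hi⟩ := hx k q p hq hk1
  refine ⟨i, ?_⟩
  have h1 : |(q : ℝ) * x i - (p i : ℝ)| = q * |x i - (p i : ℝ) / q| := by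
    rw [← abs_of_pos hq0, ← abs_mul, abs_of_pos hq0, mul_sub, mul_div_cancel₀ _ hq0.ne']
  have h2 : (R ^ 2)⁻¹ * ((q : ℝ)⁻¹ * ((q : ℝ) ^ r i)⁻¹) ≤ (R ^ (-(1 + r i))) ^ k := by
    have e1 : (R ^ (-(1 + r i))) ^ k = ((R ^ k) ^ (1 + r i))⁻¹ := by
      rw [Real.rpow_neg hR0.le, inv_pow, ← Real.rpow_natCast, ← Real.rpow_mul hR0.le, mul_comm,
        Real.rpow_mul hR0.le, Real.rpow_natCast]
    rw [e1, ← mul_inv, ← mul_inv]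
    apply inv_anti₀ (by positivity)
    have hri := hr i
    calc (R ^ k) ^ (1 + r i) ≤ (R * q) ^ (1 + r i) := by gcongr
      _ = R ^ (1 + r i) * (q * q ^ r i) := by
        rw [Real.mul_rpow hR0.le hq0.le, Real.rpow_add hq0, Real.rpow_one]
      _ ≤ R ^ (2 : ℝ) * (q * q ^ r i) := by
        gcongr
        · exact hR.le
        · linarith [hr1 i]
      _ = _ := by norm_cast
  rw [h1, Real.div_rpow hc0.le hq0.le]
  calc c ^ r i / q ^ r i ≤ (s / R ^ 3) / q ^ r i := by have := hc i; gcongr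
    _ = q * (s * ((R ^ 2)⁻¹ * ((q : ℝ)⁻¹ * ((q : ℝ) ^ r i)⁻¹)) / R) := by
      field_simp
    _ ≤ q * (s * (R ^ (-(1 + r i))) ^ k / R) := by gcongr
    _ ≤ _ := by gcongr

/-- Cells can be chosen so that every limit point avoids the rational points at all scales. -/
theorem exists_cellScheme_avoiding_rationals {n m : ℕ} (hn : 0 < n) {R s : ℝ}
    (hR : 8 * (n : ℝ) + 3 ≤ R) (hs : 0 < s) (ρ : Fin n → ℝ) (hρ : ∀ i, 0 < ρ i)
    (hρR : ∀ i, ρ i ≤ 1 / R) (hρprod : R ^ (n + 1) * ∏ i, ρ i = 1)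
    (hm : 2 * m ≤ (∏ i, ⌊1 / ρ i⌋₊) + 1)
    (hvol : ((n + 1).factorial : ℝ) * (2 * s) ^ n < 1) :
    ∃ step : ℕ → (Fin n → ℝ) → Fin m → Fin n → ℝ,
      IsCellScheme step (fun k i => s * ρ i ^ k) ∧
      ∀ (a₀ : Fin n → ℝ) (ω : ℕ → Fin m) (k q : ℕ) (p : Fin n → ℤ), 1 ≤ q → (q : ℝ) ≤ R ^ k →
        ∃ i, s * ρ i ^ k / R ≤ |cellLimit step a₀ ω i - (p i : ℝ) / q| := by
  have hR0 : 0 < R := by have : (0 : ℝ) ≤ n := by positivity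
                         linarith
  have hσ : ∀ (k : ℕ) i, 0 < s * ρ i ^ k := fun k i => mul_pos hs (pow_pos (hρ i) k)
  have hex : ∀ (k : ℕ) (a : Fin n → ℝ), _ := fun k a =>
    exists_cells_avoiding_rationals (m := m) (Q := R ^ k) hn (by positivity) hR a
      (fun i => s * ρ i ^ k) ρ (hσ k) hρ hρR hm (by
        convert hvol using 2
        have : ∀ i, 2 * (s * ρ i ^ k) = 2 * s * ρ i ^ k := fun i => by ring
        simp only [this, Finset.prod_mul_distrib, Finset.prod_const, Finset.card_univ,
          Fintype.card_fin, Finset.prod_pow]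
        calc _ = (2 * s) ^ n * (R ^ (n + 1) * ∏ i, ρ i) ^ k := by ring
          _ = _ := by rw [hρprod]; simp [mul_pow])
  choose e hinj he using hex
  have hscheme : IsCellScheme (fun k a d i => a i + e k a d i * (ρ i * (s * ρ i ^ k)))
      (fun k i => s * ρ i ^ k) := by
    refine ⟨hσ, fun k a d i => ?_, fun k a d i => ?_, fun k a d d' hd => ?_⟩
    · have := hσ k i
      have := hρ i
      have : 0 ≤ (e k a d i : ℝ) * (ρ i * (s * ρ i ^ k)) := by positivity
      linarith
    · have h1 : ((e k a d i + 1 : ℕ) : ℝ) ≤ 1 / ρ i :=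
        (Nat.cast_le.2 ((he k a d).1 i)).trans (Nat.floor_le (one_div_nonneg.2 (hρ i).le))
      rw [le_div_iff₀ (hρ i)] at h1
      push_cast at h1
      have h2 := mul_le_mul_of_nonneg_right h1 (hσ k i).le
      rw [pow_succ]
      linarith
    · obtain ⟨i, hi⟩ := Function.ne_iff.1 fun h => hd (hinj k a h)
      refine ⟨i, ?_⟩
      have h1 : (1 : ℝ) ≤ |(e k a d i : ℝ) - e k a d' i| := by
        have : (1 : ℤ) ≤ |(e k a d i : ℤ) - e k a d' i| :=
          Int.one_le_abs (sub_ne_zero.2 (by exact_mod_cast hi))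
        exact_mod_cast this
      have h2 : 0 < ρ i * (s * ρ i ^ k) := mul_pos (hρ i) (hσ k i)
      rw [add_sub_add_left_eq_sub, ← sub_mul, abs_mul, abs_of_pos h2, pow_succ]
      nlinarith
  refine ⟨_, hscheme, fun a₀ ω k q p hq hqR => ?_⟩
  set a := cellCorner (fun k a d i => a i + e k a d i * (ρ i * (s * ρ i ^ k))) a₀ k
    (fun l => ω l) with ha
  obtain ⟨i, hi⟩ := (he k a (ω k)).2 q p hq hqR
  refine ⟨i, ?_⟩
  have h1 := hscheme.corner_le_limit a₀ ω (k + 1) i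
  have h2 := hscheme.limit_le_corner_add a₀ ω (k + 1) i
  rw [cellCorner_succ, ← ha] at h1 h2
  have h3 : s * ρ i ^ (k + 1) ≤ s * ρ i ^ k / R := by
    rw [pow_succ, ← mul_assoc, div_eq_mul_one_div]
    exact mul_le_mul_of_nonneg_left (hρR i) (hσ k i).le
  have h4 : 2 * (s * ρ i ^ k) / R = s * ρ i ^ k / R + s * ρ i ^ k / R := by ring
  rw [h4] at hi
  rcases lt_abs.1 hi with h5 | h5
  · exact le_abs.2 (Or.inl (by linarith))
  · exact le_abs.2 (Or.inr (by linarith))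

/-- The set of `r̄`-badly approximable vectors in `ℝⁿ` is thick:
its intersection with every nonempty open set has full Hausdorff dimension `n`. -/
theorem stmt12 (n : ℕ) (hn : 1 ≤ n) (r : Fin n → ℝ)
    (hr : ∀ i, 0 < r i) (hsum : ∑ i, r i = 1)
    (U : Set (Fin n → ℝ)) (hU : IsOpen U) (hUne : U.Nonempty) :
    dimH ({x : Fin n → ℝ | ∃ c : ℝ, 0 < c ∧
        ∀ q : ℕ, 1 ≤ q → ∀ p : Fin n → ℤ,
          ∃ i, (c / (q : ℝ)) ^ (r i) ≤ |(q : ℝ) * x i - (p i : ℝ)|} ∩ U) = (n : ENNReal) := by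
  refine le_antisymm ((dimH_mono (subset_univ _)).trans_eq (Real.dimH_univ_pi_fin n)) ?_
  refine ENNReal.le_of_forall_nnreal_lt fun t ht => ?_
  have htn : (t : ℝ) < n := by exact_mod_cast ht
  have hr1 : ∀ i, r i ≤ 1 := fun i => hsum ▸
    Finset.single_le_sum (fun j _ => (hr j).le) (Finset.mem_univ i)
  set ε : ℝ := n - t with hε
  have hε0 : 0 < ε := by linarith
  set R : ℝ := max (8 * n + 3) ((2 ^ (n + 1) : ℝ) ^ (1 / ε)) with hRdef
  have hR : 8 * (n : ℝ) + 3 ≤ R := le_max_left _ _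
  have hR1 : 1 < R := by have : (0 : ℝ) ≤ n := by positivity
                         linarith
  have hR0 : 0 < R := by linarith
  have hRε : (2 ^ (n + 1) : ℝ) ≤ R ^ ε := by
    calc (2 ^ (n + 1) : ℝ) = ((2 ^ (n + 1) : ℝ) ^ (1 / ε)) ^ ε := by
          rw [← Real.rpow_mul (by positivity), one_div_mul_cancel hε0.ne', Real.rpow_one]
      _ ≤ R ^ ε := by
          gcongr
          exact le_max_right _ _
  set ρ : Fin n → ℝ := fun i => R ^ (-(1 + r i)) with hρdef
  have hρ : ∀ i, 0 < ρ i := fun i => Real.rpow_pos_of_pos hR0 _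
  have hρR : ∀ i, ρ i ≤ 1 / R := fun i => by
    rw [one_div, ← Real.rpow_neg_one]
    exact Real.rpow_le_rpow_of_exponent_le hR1.le (by linarith [hr i])
  have hρprod : R ^ (n + 1) * ∏ i, ρ i = 1 := by
    rw [hρdef, ← Real.rpow_sum_of_pos hR0, Finset.sum_neg_distrib, Finset.sum_add_distrib, hsum,
      ← Real.rpow_natCast, ← Real.rpow_add hR0]
    simp
  set N := ∏ i, ⌊1 / ρ i⌋₊ with hN
  have hNpos : 0 < N := Finset.prod_pos fun i _ => Nat.floor_pos.2 <| by
    rw [le_div_iff₀ (hρ i), one_mul]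
    exact (hρR i).trans (by rw [div_le_one hR0]; exact hR1.le)
  set m := (N + 1) / 2 with hm
  have : NeZero m := ⟨by omega⟩
  have hmη : (1 / 2 ^ (n + 1) : ℝ) ≤ m * ∏ i, ρ i := by
    have h1 : (1 / 2 : ℝ) * N ≤ m := by
      have : (N : ℝ) ≤ 2 * m := by exact_mod_cast (by omega : N ≤ 2 * m)
      linarith
    have h2 : (1 / 2 : ℝ) ^ n ≤ N * ∏ i, ρ i := by
      rw [hN, Nat.cast_prod, ← Finset.prod_mul_distrib]
      calc (1 / 2 : ℝ) ^ n = ∏ i : Fin n, (1 / 2 : ℝ) := by simp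
        _ ≤ _ := Finset.prod_le_prod (fun _ _ => by norm_num) fun i _ => by
          have h3 := Nat.lt_floor_add_one (1 / ρ i)
          rw [div_lt_iff₀ (hρ i)] at h3
          have h4 : ρ i ≤ 1 / 2 := (hρR i).trans <|
            one_div_le_one_div_of_le (by norm_num) (by linarith [(Nat.cast_nonneg n : (0:ℝ) ≤ n)])
          linarith
    have hP : 0 ≤ ∏ i, ρ i := Finset.prod_nonneg fun i _ => (hρ i).le
    calc (1 / 2 ^ (n + 1) : ℝ) = 1 / 2 * (1 / 2) ^ n := by rw [← pow_succ', one_div_pow]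
      _ ≤ 1 / 2 * (N * ∏ i, ρ i) := by gcongr
      _ = (1 / 2 * N) * ∏ i, ρ i := by ring
      _ ≤ _ := by gcongr
  obtain ⟨x₀, hx₀⟩ := hUne
  obtain ⟨δ, hδ, hball⟩ := Metric.isOpen_iff.1 hU x₀ hx₀
  set f : ℝ := ((n + 1).factorial : ℝ) with hf
  have hf1 : 1 ≤ f := Nat.one_le_cast.2 (Nat.factorial_pos _)
  set s : ℝ := min (δ / 2) (1 / (4 * f)) with hsdef
  have hs : 0 < s := lt_min (by positivity) (by positivity)
  have hsδ : s < δ := (min_le_left _ _).trans_lt (by linarith)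
  have hsf : f * (2 * s) ≤ 1 / 2 := by
    have : s ≤ 1 / (4 * f) := min_le_right _ _
    rw [le_div_iff₀ (by positivity)] at this
    linarith
  have hvol : f * (2 * s) ^ n < 1 := by
    have h1 : (2 * s) ^ n ≤ 2 * s :=
      pow_le_of_le_one (by positivity) (by nlinarith) (by omega)
    nlinarith
  obtain ⟨step, hstep, havoid⟩ := exists_cellScheme_avoiding_rationals (m := m) hn hR hs ρ hρ hρR
    hρprod (by omega) hvol
  obtain ⟨c, hc, hbad⟩ := exists_badly_approximable_constant hr hr1 hR1 hs
  refine hstep.le_dimH x₀ hs hR1 (η := 1 / 2 ^ (n + 1)) (ε := ε) hε0.le hρ hρR hmη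
    ?_ (by simp [hε]) fun ω => ⟨⟨c, hc, hbad _ (havoid x₀ ω)⟩, hball ?_⟩
  · rwa [one_div_mul_eq_div, one_le_div (by positivity)]
  · refine lt_of_le_of_lt ((dist_pi_le_iff hs.le).2 fun i => ?_) hsδ
    have h1 := hstep.corner_le_limit x₀ ω 0 i
    have h2 := hstep.limit_le_corner_add x₀ ω 0 i
    simp only [cellCorner, pow_zero, mul_one] at h1 h2
    rw [Real.dist_eq, abs_of_nonneg (by linarith)]
    linarith
end

section
/- Let p be a prime and let r₁, r₂ ≥ 0 with r₁ + r₂ = 1. Define Bad^{r̄}_{ℤ_p²} = { x = (x₁, x₂) ∈ ℤ_p² : ∃ c > 0 such that for all z₁, z₂ ∈ ℤ and all q ∈ ℕ (q ≥ 1) there exists i ∈ {1, 2} with |x_i − z_i/q|_p ≥ (c / max(|z₁|, |z₂|, q))^{1 + r_i} }. Then Bad^{r̄}_{ℤ_p²} is thick: for every nonempty open set U ⊆ ℤ_p², the Hausdorff dimension of Bad^{r̄}_{ℤ_p²} ∩ U equals 2. -/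
open Set MeasureTheory Topology Filter
open scoped ENNReal NNReal

namespace PadicInt

variable {p : ℕ} [Fact p.Prime]

/-- The box in `ℤ_p²` of sides `p⁻ᵏ` and `p⁻ˡ` around `x`. -/
noncomputable def box (k l : ℕ) (x : ℤ_[p] × ℤ_[p]) : Set (ℤ_[p] × ℤ_[p]) :=
  {y | (p : ℤ_[p]) ^ k ∣ y.1 - x.1 ∧ (p : ℤ_[p]) ^ l ∣ y.2 - x.2}

/-- The point of index `g` in the grid of step `(pᵏ, pˡ)` based at `x`. -/
noncomputable def gridPoint (k l : ℕ) (x : ℤ_[p] × ℤ_[p]) (g : ℕ × ℕ) : ℤ_[p] × ℤ_[p] :=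
  (x.1 + (p : ℤ_[p]) ^ k * g.1, x.2 + (p : ℤ_[p]) ^ l * g.2)

theorem pow_dvd_iff_norm_le (x : ℤ_[p]) (n : ℕ) :
    (p : ℤ_[p]) ^ n ∣ x ↔ ‖x‖ ≤ (p : ℝ) ^ (-n : ℤ) := by
  rw [norm_le_pow_iff_mem_span_pow, Ideal.mem_span_singleton]

theorem self_mem_box (k l : ℕ) (x : ℤ_[p] × ℤ_[p]) : x ∈ box k l x := by
  simp [box]

theorem box_subset_box {k k' l l' : ℕ} (hk : k ≤ k') (hl : l ≤ l') {x y z : ℤ_[p] × ℤ_[p]}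
    (hx : z ∈ box k l x) (hy : z ∈ box k' l' y) : box k' l' y ⊆ box k l x := by
  intro w hw
  constructor
  · have h := dvd_add (dvd_sub ((pow_dvd_pow _ hk).trans hw.1) ((pow_dvd_pow _ hk).trans hy.1)) hx.1
    convert! h using 1
    ring
  · have h := dvd_add (dvd_sub ((pow_dvd_pow _ hl).trans hw.2) ((pow_dvd_pow _ hl).trans hy.2)) hx.2
    convert! h using 1
    ring

theorem box_self_eq_closedBall (m : ℕ) (x : ℤ_[p] × ℤ_[p]) :
    box m m x = Metric.closedBall x ((p : ℝ) ^ (-m : ℤ)) := by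
  ext y
  simp [box, pow_dvd_iff_norm_le, dist_eq_norm, Prod.norm_def]

theorem isClopen_box (k l : ℕ) (x : ℤ_[p] × ℤ_[p]) : IsClopen (box k l x) := by
  have hp : ∀ n : ℕ, (p : ℝ) ^ (-n : ℤ) ≠ 0 := fun n ↦
    zpow_ne_zero _ (Nat.cast_ne_zero.2 (Fact.out : p.Prime).ne_zero)
  have : box k l x = Metric.closedBall x.1 ((p : ℝ) ^ (-k : ℤ)) ×ˢ
      Metric.closedBall x.2 ((p : ℝ) ^ (-l : ℤ)) := by
    ext y
    simp [box, pow_dvd_iff_norm_le, dist_eq_norm]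
  rw [this]
  exact (IsUltrametricDist.isClopen_closedBall _ (hp k)).prod
    (IsUltrametricDist.isClopen_closedBall _ (hp l))

theorem gridPoint_mem_box (k l : ℕ) (x : ℤ_[p] × ℤ_[p]) (g : ℕ × ℕ) :
    gridPoint k l x g ∈ box k l x := by
  simp [gridPoint, box]

theorem eq_of_pow_add_dvd {k a i j : ℕ} (hi : i < p ^ a) (hj : j < p ^ a)
    (h : (p : ℤ_[p]) ^ (k + a) ∣ (p : ℤ_[p]) ^ k * i - (p : ℤ_[p]) ^ k * j) : i = j := by
  have hp : (p : ℤ_[p]) ^ k ≠ 0 := pow_ne_zero _ prime_p.ne_zero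
  rw [pow_add, ← mul_sub, mul_dvd_mul_iff_left hp] at h
  have h' : (p : ℤ_[p]) ^ a ∣ ((i - j : ℤ) : ℤ_[p]) := by push_cast; exact h
  rw [pow_p_dvd_int_iff] at h'
  have := (Int.modEq_iff_dvd.2 (by exact_mod_cast h') : (j : ℤ) ≡ i [ZMOD ((p ^ a : ℕ) : ℤ)])
  exact ((Int.natCast_modEq_iff.1 this).eq_of_lt_of_lt hj hi).symm

theorem pairwiseDisjoint_box_gridPoint (k l a b : ℕ) (x : ℤ_[p] × ℤ_[p]) :
    (↑(Finset.range (p ^ a) ×ˢ Finset.range (p ^ b)) : Set (ℕ × ℕ)).PairwiseDisjoint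
      fun g ↦ box (k + a) (l + b) (gridPoint k l x g) := by
  intro g hg h hh hgh
  simp only [Finset.coe_product, Finset.coe_range, mem_prod, mem_Iio] at hg hh
  refine Set.disjoint_left.2 fun y hy hy' ↦ hgh (Prod.ext ?_ ?_)
  · refine eq_of_pow_add_dvd (k := k) hg.1 hh.1 ?_
    convert! dvd_sub hy'.1 hy.1 using 1
    simp only [gridPoint]
    ring
  · refine eq_of_pow_add_dvd (k := l) hg.2 hh.2 ?_
    convert! dvd_sub hy'.2 hy.2 using 1
    simp only [gridPoint]
    ring

theorem iUnion_box_gridPoint_zero (k l : ℕ) :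
    ⋃ g ∈ Finset.range (p ^ k) ×ˢ Finset.range (p ^ l), box k l (gridPoint 0 0 0 g) =
      (univ : Set (ℤ_[p] × ℤ_[p])) := by
  refine eq_univ_of_forall fun x ↦ mem_iUnion₂.2 ⟨(x.1.appr k, x.2.appr l), ?_, ?_⟩
  · simpa using ⟨appr_lt _ _, appr_lt _ _⟩
  · simpa [gridPoint, box] using ⟨Ideal.mem_span_singleton.1 (appr_spec k x.1),
      Ideal.mem_span_singleton.1 (appr_spec l x.2)⟩

theorem exists_measure_box_eq [MeasurableSpace (ℤ_[p] × ℤ_[p])] [BorelSpace (ℤ_[p] × ℤ_[p])] :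
    ∃ μ : Measure (ℤ_[p] × ℤ_[p]), ∀ k l x, μ (box k l x) = ((p : ℝ≥0∞) ^ (k + l))⁻¹ := by
  refine ⟨Measure.addHaarMeasure ⊤, fun k l ↦ ?_⟩
  set μ : Measure (ℤ_[p] × ℤ_[p]) := Measure.addHaarMeasure ⊤ with hμ
  have hinv : ∀ x, μ (box k l x) = μ (box k l 0) := fun x ↦ by
    rw [← measure_preimage_add μ (-x) (box k l 0)]
    congr 1
    ext y
    simp [box, sub_eq_neg_add]
  have huniv : μ univ = 1 := by
    simpa using Measure.addHaarMeasure_self (K₀ := (⊤ : TopologicalSpace.PositiveCompacts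
      (ℤ_[p] × ℤ_[p])))
  intro x
  have hd := pairwiseDisjoint_box_gridPoint (p := p) 0 0 k l 0
  simp only [zero_add] at hd
  rw [← iUnion_box_gridPoint_zero k l, measure_biUnion_finset hd
    fun g _ ↦ (isClopen_box _ _ _).isOpen.measurableSet, Finset.sum_congr rfl fun g _ ↦ hinv _,
    Finset.sum_const, Finset.card_product, Finset.card_range, Finset.card_range, ← pow_add,
    nsmul_eq_mul, mul_comm] at huniv
  rw [hinv]
  simpa using ENNReal.eq_inv_of_mul_eq_one_left huniv
open scoped Classical in
theorem exists_gridPoint_tsum_lt [MeasurableSpace (ℤ_[p] × ℤ_[p])]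
    [BorelSpace (ℤ_[p] × ℤ_[p])] {μ : Measure (ℤ_[p] × ℤ_[p])}
    (hμ : ∀ k l x, μ (box k l x) = ((p : ℝ≥0∞) ^ (k + l))⁻¹) {k l a b : ℕ}
    {c : ℤ_[p] × ℤ_[p]} {good : Set (ℤ_[p] × ℤ_[p])} {Θ : ℝ≥0∞}
    (hgood : (p : ℝ≥0∞) ^ (a + b) ≤
      ((Finset.range (p ^ a) ×ˢ Finset.range (p ^ b)).filter
        fun g ↦ gridPoint k l c g ∈ good).card * Θ)
    {n : ℕ} (hnk : n ≤ k) (hnl : n ≤ l) {y : ℕ → ℤ_[p] × ℤ_[p]} {m : ℕ → ℕ}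
    (h : ∑' i, μ (box (m i) (m i) (y i) ∩ box k l c) * Θ ^ (m i - n) < μ (box k l c)) :
    ∃ c' ∈ box k l c, c' ∈ good ∧
      ∑' i, μ (box (m i) (m i) (y i) ∩ box (k + a) (l + b) c') * Θ ^ (m i - (n + 1)) <
        μ (box (k + a) (l + b) c') := by
  have hp0 : (p : ℝ≥0∞) ≠ 0 := Nat.cast_ne_zero.2 (Fact.out : p.Prime).ne_zero
  have hpt : (p : ℝ≥0∞) ≠ ⊤ := ENNReal.natCast_ne_top p
  set G := (Finset.range (p ^ a) ×ˢ Finset.range (p ^ b)).filter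
    fun g ↦ gridPoint k l c g ∈ good with hG
  by_contra! hcon
  have hlow : ∀ g ∈ G, ((p : ℝ≥0∞) ^ (k + a + (l + b)))⁻¹ ≤
      ∑' i, μ (box (m i) (m i) (y i) ∩ box (k + a) (l + b) (gridPoint k l c g)) *
        Θ ^ (m i - (n + 1)) := fun g hg ↦ by
    rw [← hμ _ _ (gridPoint k l c g)]
    exact hcon _ (gridPoint_mem_box k l c g) (Finset.mem_filter.1 hg).2
  have hsum := Finset.sum_le_sum hlow
  rw [Finset.sum_const, nsmul_eq_mul, ← Summable.tsum_finsetSum fun _ _ ↦ ENNReal.summable] at hsum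
  have hterm : ∀ i, (∑ g ∈ G, μ (box (m i) (m i) (y i) ∩
      box (k + a) (l + b) (gridPoint k l c g)) * Θ ^ (m i - (n + 1))) * Θ ≤
      μ (box (m i) (m i) (y i) ∩ box k l c) * Θ ^ (m i - n) := by
    intro i
    have hadd : ∑ g ∈ G, μ (box (m i) (m i) (y i) ∩
        box (k + a) (l + b) (gridPoint k l c g)) ≤ μ (box (m i) (m i) (y i) ∩ box k l c) := by
      rw [← measure_biUnion_finset]
      · refine measure_mono (iUnion₂_subset fun g _ ↦ inter_subset_inter_right _ ?_)
        exact box_subset_box (Nat.le_add_right _ _) (Nat.le_add_right _ _)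
          (gridPoint_mem_box k l c g) (self_mem_box _ _ _)
      · refine ((pairwiseDisjoint_box_gridPoint k l a b c).subset ?_).mono fun g ↦
          inter_subset_right
        exact Finset.coe_subset.2 (Finset.filter_subset _ _)
      · exact fun g _ ↦ ((isClopen_box _ _ _).isOpen.inter
          (isClopen_box _ _ _).isOpen).measurableSet
    rw [← Finset.sum_mul, mul_assoc, ← pow_succ]
    rcases lt_or_ge n (m i) with hn | hn
    · rw [show m i - (n + 1) + 1 = m i - n by omega]
      gcongr
    · suffices h0 : μ (box (m i) (m i) (y i) ∩ box k l c) = 0 by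
        rw [h0, nonpos_iff_eq_zero] at hadd
        simp [hadd]
      rcases (box (m i) (m i) (y i) ∩ box k l c).eq_empty_or_nonempty with he | ⟨z, hz, hz'⟩
      · simp [he]
      · have hsub := box_subset_box (hn.trans hnk) (hn.trans hnl) hz hz'
        refine absurd h (not_lt.2 ?_)
        refine le_trans (le_of_eq ?_) (ENNReal.le_tsum i)
        rw [inter_eq_right.2 hsub, Nat.sub_eq_zero_of_le hn, pow_zero, mul_one]
  have hle : (G.card : ℝ≥0∞) * ((p : ℝ≥0∞) ^ (k + a + (l + b)))⁻¹ * Θ < μ (box k l c) :=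
    calc _ ≤ (∑' i, ∑ g ∈ G, μ (box (m i) (m i) (y i) ∩
          box (k + a) (l + b) (gridPoint k l c g)) * Θ ^ (m i - (n + 1))) * Θ := by gcongr
      _ ≤ ∑' i, μ (box (m i) (m i) (y i) ∩ box k l c) * Θ ^ (m i - n) := by
        rw [← ENNReal.tsum_mul_right]
        exact ENNReal.tsum_le_tsum hterm
      _ < _ := h
  refine absurd hle (not_lt.2 ?_)
  calc μ (box k l c) = (p : ℝ≥0∞) ^ (a + b) * ((p : ℝ≥0∞) ^ (k + a + (l + b)))⁻¹ := by
        rw [hμ, show k + a + (l + b) = (a + b) + (k + l) by ring, pow_add _ (a + b),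
          ENNReal.mul_inv (Or.inl (pow_ne_zero _ hp0)) (Or.inl (ENNReal.pow_ne_top hpt)),
          ← mul_assoc, ENNReal.mul_inv_cancel (pow_ne_zero _ hp0) (ENNReal.pow_ne_top hpt),
          one_mul]
    _ ≤ G.card * Θ * ((p : ℝ≥0∞) ^ (k + a + (l + b)))⁻¹ := by gcongr
    _ = _ := by ring

open scoped Classical in
theorem exists_mem_box_forall_notMem_box [MeasurableSpace (ℤ_[p] × ℤ_[p])]
    [BorelSpace (ℤ_[p] × ℤ_[p])] {μ : Measure (ℤ_[p] × ℤ_[p])}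
    (hμ : ∀ k l x, μ (box k l x) = ((p : ℝ≥0∞) ^ (k + l))⁻¹)
    {k l a b : ℕ → ℕ} (hk : ∀ n, k (n + 1) = k n + a n) (hl : ∀ n, l (n + 1) = l n + b n)
    (hnk : ∀ n, n ≤ k n) (hnl : ∀ n, n ≤ l n)
    {good : ℕ → Set (ℤ_[p] × ℤ_[p])} {Θ : ℝ≥0∞} (hΘ : 1 ≤ Θ)
    (hgood : ∀ n c, (p : ℝ≥0∞) ^ (a n + b n) ≤
      ((Finset.range (p ^ a n) ×ˢ Finset.range (p ^ b n)).filter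
        fun g ↦ gridPoint (k n) (l n) c g ∈ good n).card * Θ)
    (N : ℕ) (c₀ : ℤ_[p] × ℤ_[p]) {y : ℕ → ℤ_[p] × ℤ_[p]} {m : ℕ → ℕ}
    (h : ∑' i, μ (box (m i) (m i) (y i)) * Θ ^ m i < μ (box (k N) (l N) c₀)) :
    ∃ x ∈ box (k N) (l N) c₀,
      (∀ n, N ≤ n → ∃ c ∈ good n, x ∈ box (k (n + 1)) (l (n + 1)) c) ∧
      ∀ i, x ∉ box (m i) (m i) (y i) := by
  let S : ℕ → Set (ℤ_[p] × ℤ_[p]) := fun n ↦ {c |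
    ∑' i, μ (box (m i) (m i) (y i) ∩ box (k n) (l n) c) * Θ ^ (m i - n) < μ (box (k n) (l n) c)}
  have step : ∀ n, ∀ c : S n, ∃ c' : S (n + 1), c'.1 ∈ box (k n) (l n) c.1 ∧ c'.1 ∈ good n := by
    intro n c
    obtain ⟨c', h1, h2, h3⟩ := exists_gridPoint_tsum_lt hμ (hgood n c) (hnk n) (hnl n) c.2
    rw [← hk, ← hl] at h3
    exact ⟨⟨c', h3⟩, h1, h2⟩
  choose f hf hfg using step
  have h₀ : c₀ ∈ S N := by
    refine lt_of_le_of_lt (ENNReal.tsum_le_tsum fun i ↦ ?_) h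
    gcongr
    · exact inter_subset_left
    · exact Nat.sub_le _ _
  let u : ∀ j, S (N + j) := fun j ↦ Nat.rec ⟨c₀, h₀⟩ (fun j c ↦ f (N + j) c) j
  let B : ℕ → Set (ℤ_[p] × ℤ_[p]) := fun j ↦ box (k (N + j)) (l (N + j)) (u j).1
  have hB : ∀ j, B (j + 1) ⊆ B j := fun j ↦
    box_subset_box (by rw [← add_assoc, hk]; omega) (by rw [← add_assoc, hl]; omega)
      (hf (N + j) (u j)) (self_mem_box _ _ _)
  obtain ⟨x, hx⟩ := IsCompact.nonempty_iInter_of_sequence_nonempty_isCompact_isClosed B hB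
    (fun j ↦ ⟨_, self_mem_box _ _ _⟩) (isClopen_box _ _ _).isClosed.isCompact
    fun j ↦ (isClopen_box _ _ _).isClosed
  rw [mem_iInter] at hx
  refine ⟨x, hx 0, fun n hn ↦ ?_, fun i hi ↦ ?_⟩
  · obtain ⟨j, rfl⟩ := Nat.exists_eq_add_of_le hn
    exact ⟨(u (j + 1)).1, hfg (N + j) (u j), hx (j + 1)⟩
  · have hsub : B (m i) ⊆ box (m i) (m i) (y i) :=
      box_subset_box ((Nat.le_add_left _ N).trans (hnk _)) ((Nat.le_add_left _ N).trans (hnl _))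
        hi (hx (m i))
    have hlt := (u (m i)).2
    simp only [S, mem_ofPred_eq] at hlt
    refine absurd hlt (not_lt.2 ?_)
    refine le_trans (le_of_eq ?_) (ENNReal.le_tsum i)
    rw [inter_eq_right.2 hsub, Nat.sub_eq_zero_of_le (Nat.le_add_left _ _), pow_zero, mul_one]

theorem exists_int_linear_relation {V : Set (ℤ × ℤ × ℤ)} (hV : ∀ v ∈ V, v.1 ≠ 0)
    (hdet : ∀ u ∈ V, ∀ v ∈ V, ∀ w ∈ V,
      u.1 * (v.2.1 * w.2.2 - v.2.2 * w.2.1) - v.1 * (u.2.1 * w.2.2 - u.2.2 * w.2.1) +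
        w.1 * (u.2.1 * v.2.2 - u.2.2 * v.2.1) = 0) :
    ∃ A B C : ℤ, ¬(A = 0 ∧ B = 0 ∧ C = 0) ∧ ∀ v ∈ V, A * v.1 + B * v.2.1 + C * v.2.2 = 0 := by
  rcases V.eq_empty_or_nonempty with rfl | ⟨u, hu⟩
  · exact ⟨1, 0, 0, by simp, by simp⟩
  by_cases h : ∃ v ∈ V, ¬(u.2.1 * v.2.2 - u.2.2 * v.2.1 = 0 ∧ u.2.2 * v.1 - u.1 * v.2.2 = 0 ∧
      u.1 * v.2.1 - u.2.1 * v.1 = 0)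
  · obtain ⟨v, hv, hne⟩ := h
    exact ⟨_, _, _, hne, fun w hw ↦ by linear_combination hdet u hu v hv w hw⟩
  · push Not at h
    refine ⟨-u.2.1, u.1, 0, fun h0 ↦ hV u hu h0.2.1, fun v hv ↦ ?_⟩
    linear_combination (h v hv).2.2

/-- The points of `ℤ_p²` which avoid the boxes of sides `p⁻ᵏ` and `p⁻ˡ` around all the rational
points `(z₁/q, z₂/q)` with `q` prime to `p` and height at most `T / 2`. -/
def farFromRationals (p : ℕ) [Fact p.Prime] (T k l : ℕ) : Set (ℤ_[p] × ℤ_[p]) :=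
  {x | ∀ q z₁ z₂ : ℤ, 2 * |q| ≤ T → 2 * |z₁| ≤ T → 2 * |z₂| ≤ T → ¬(p : ℤ) ∣ q →
    ¬((p : ℤ_[p]) ^ k ∣ q * x.1 - z₁ ∧ (p : ℤ_[p]) ^ l ∣ q * x.2 - z₂)}

theorem farFromRationals_of_mem_box {T k l : ℕ} {c x : ℤ_[p] × ℤ_[p]}
    (hc : c ∈ farFromRationals p T k l) (hx : x ∈ box k l c) : x ∈ farFromRationals p T k l := by
  intro q z₁ z₂ hq h₁ h₂ hpq h
  refine hc q z₁ z₂ hq h₁ h₂ hpq ⟨?_, ?_⟩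
  · convert! dvd_sub h.1 (hx.1.mul_left (q : ℤ_[p])) using 1
    ring
  · convert! dvd_sub h.2 (hx.2.mul_left (q : ℤ_[p])) using 1
    ring

theorem eight_mul_abs_mul_le {T x y z : ℤ} (hx : 2 * |x| ≤ T) (hy : 2 * |y| ≤ T)
    (hz : 2 * |z| ≤ T) : 8 * |x * y * z| ≤ T ^ 3 := by
  calc 8 * |x * y * z| = (2 * |x|) * (2 * |y|) * (2 * |z|) := by rw [abs_mul, abs_mul]; ring
    _ ≤ T * T * T := by
      have : 0 ≤ T := (by positivity : 0 ≤ 2 * |x|).trans hx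
      gcongr
    _ = T ^ 3 := by ring

theorem det_eq_zero_of_pow_dvd {T k l : ℕ} (hT : 0 < T) (hTkl : T ^ 3 ≤ p ^ (k + l))
    {c : ℤ_[p] × ℤ_[p]} {u v w : ℤ × ℤ × ℤ}
    (hu : (2 * |u.1| ≤ T ∧ 2 * |u.2.1| ≤ T ∧ 2 * |u.2.2| ≤ T) ∧
      (p : ℤ_[p]) ^ k ∣ u.1 * c.1 - u.2.1 ∧ (p : ℤ_[p]) ^ l ∣ u.1 * c.2 - u.2.2)
    (hv : (2 * |v.1| ≤ T ∧ 2 * |v.2.1| ≤ T ∧ 2 * |v.2.2| ≤ T) ∧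
      (p : ℤ_[p]) ^ k ∣ v.1 * c.1 - v.2.1 ∧ (p : ℤ_[p]) ^ l ∣ v.1 * c.2 - v.2.2)
    (hw : (2 * |w.1| ≤ T ∧ 2 * |w.2.1| ≤ T ∧ 2 * |w.2.2| ≤ T) ∧
      (p : ℤ_[p]) ^ k ∣ w.1 * c.1 - w.2.1 ∧ (p : ℤ_[p]) ^ l ∣ w.1 * c.2 - w.2.2) :
    u.1 * (v.2.1 * w.2.2 - v.2.2 * w.2.1) - v.1 * (u.2.1 * w.2.2 - u.2.2 * w.2.1) +
      w.1 * (u.2.1 * v.2.2 - u.2.2 * v.2.1) = 0 := by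
  obtain ⟨⟨u0, u1, u2⟩, ⟨e₁, he₁⟩, f₁, hf₁⟩ := hu
  obtain ⟨⟨v0, v1, v2⟩, ⟨e₂, he₂⟩, f₂, hf₂⟩ := hv
  obtain ⟨⟨w0, w1, w2⟩, ⟨e₃, he₃⟩, f₃, hf₃⟩ := hw
  rw [sub_eq_iff_eq_add, ← sub_eq_iff_eq_add'] at he₁ hf₁ he₂ hf₂ he₃ hf₃
  refine Int.eq_zero_of_abs_lt_dvd (m := (p : ℤ) ^ (k + l)) ?_ ?_
  · rw [← pow_p_dvd_int_iff]
    refine ⟨u.1 * (e₂ * f₃ - f₂ * e₃) - v.1 * (e₁ * f₃ - f₁ * e₃) + w.1 * (e₁ * f₂ - f₁ * e₂), ?_⟩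
    push_cast
    rw [← he₁, ← he₂, ← he₃, ← hf₁, ← hf₂, ← hf₃]
    ring
  · have hT' : (0 : ℤ) < (T : ℤ) ^ 3 := by positivity
    have hTkl' : (T : ℤ) ^ 3 ≤ (p : ℤ) ^ (k + l) := by exact_mod_cast hTkl
    refine lt_of_lt_of_le ?_ hTkl'
    have hb : ∀ {x y z : ℤ}, 2 * |x| ≤ T → 2 * |y| ≤ T → 2 * |z| ≤ T →
        8 * (x * y * z) ≤ (T : ℤ) ^ 3 ∧ -(T : ℤ) ^ 3 ≤ 8 * (x * y * z) := by
      intro x y z hx hy hz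
      have h := eight_mul_abs_mul_le hx hy hz
      constructor <;> linarith [le_abs_self (x * y * z), neg_abs_le (x * y * z)]
    have h₁ := hb u0 v1 w2
    have h₂ := hb u0 v2 w1
    have h₃ := hb v0 u1 w2
    have h₄ := hb v0 u2 w1
    have h₅ := hb w0 u1 v2
    have h₆ := hb w0 u2 v1
    rw [abs_lt]
    constructor <;> linarith

/-- In a box of sides `p⁻ᵏ` and `p⁻ˡ`, the rational points of small height lie on a line. Hence the
subboxes which meet a small neighbourhood of one of these points form the graph of a function of
one of the two coordinates. -/
theorem injOn_of_near_rationals {T k l k' l' : ℕ} (hT : 0 < T) (hTkl : T ^ 3 ≤ p ^ (k + l))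
    (hk : k ≤ k') (hl : l ≤ l') (c : ℤ_[p] × ℤ_[p]) :
    (∀ x ∈ box k l c, ∀ y ∈ box k l c, x ∉ farFromRationals p T k' l' →
      y ∉ farFromRationals p T k' l' → (p : ℤ_[p]) ^ l' ∣ x.2 - y.2 →
        (p : ℤ_[p]) ^ k' ∣ x.1 - y.1) ∨
    (∀ x ∈ box k l c, ∀ y ∈ box k l c, x ∉ farFromRationals p T k' l' →
      y ∉ farFromRationals p T k' l' → (p : ℤ_[p]) ^ k' ∣ x.1 - y.1 →
        (p : ℤ_[p]) ^ l' ∣ x.2 - y.2) := by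
  obtain ⟨A, B, C, hne, hV⟩ := exists_int_linear_relation
    (V := {u : ℤ × ℤ × ℤ | ((2 * |u.1| ≤ T ∧ 2 * |u.2.1| ≤ T ∧ 2 * |u.2.2| ≤ T) ∧
      (p : ℤ_[p]) ^ k ∣ u.1 * c.1 - u.2.1 ∧ (p : ℤ_[p]) ^ l ∣ u.1 * c.2 - u.2.2) ∧
      ¬(p : ℤ) ∣ u.1}) (fun v hv h0 ↦ hv.2 (h0 ▸ dvd_zero _))
    (fun u hu v hv w hw ↦ det_eq_zero_of_pow_dvd hT hTkl hu.1 hv.1 hw.1)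
  have key : ∀ x ∈ box k l c, x ∉ farFromRationals p T k' l' → ∃ D E : ℤ_[p],
      (A : ℤ_[p]) + B * x.1 + C * x.2 = B * (p : ℤ_[p]) ^ k' * D + C * (p : ℤ_[p]) ^ l' * E ∧
      (B = 0 → C ≠ 0) := by
    intro x hx hfar
    simp only [farFromRationals, mem_ofPred_eq, not_forall, not_not] at hfar
    obtain ⟨q, z₁, z₂, hq, hz₁, hz₂, hpq, ⟨e, he⟩, f, hf⟩ := hfar
    have hrel := hV (q, z₁, z₂) ⟨⟨⟨hq, hz₁, hz₂⟩, by
      convert! dvd_sub (Dvd.intro e he.symm |> (pow_dvd_pow _ hk).trans)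
        (hx.1.mul_left (q : ℤ_[p])) using 1
      ring, by
      convert! dvd_sub (Dvd.intro f hf.symm |> (pow_dvd_pow _ hl).trans)
        (hx.2.mul_left (q : ℤ_[p])) using 1
      ring⟩, hpq⟩
    simp only at hrel
    have hunit : IsUnit (q : ℤ_[p]) := by
      rw [isUnit_iff]
      exact le_antisymm (norm_le_one _)
        (not_lt.1 (mt (norm_int_lt_one_iff_dvd q).1 hpq))
    obtain ⟨r, hr⟩ := hunit.exists_right_inv
    have hrel' : (A : ℤ_[p]) * q + B * z₁ + C * z₂ = 0 := by exact_mod_cast hrel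
    refine ⟨e * r, f * r, ?_, ?_⟩
    · linear_combination r * hrel' + B * r * he + C * r * hf -
        (A + B * x.1 + C * x.2) * hr
    · rintro rfl rfl
      refine hne ⟨?_, rfl, rfl⟩
      have hq0 : q ≠ 0 := fun h0 ↦ hpq (h0 ▸ dvd_zero _)
      simpa [hq0] using hrel
  have hpk : (p : ℤ_[p]) ^ k' ≠ 0 := pow_ne_zero _ prime_p.ne_zero
  have hpl : (p : ℤ_[p]) ^ l' ≠ 0 := pow_ne_zero _ prime_p.ne_zero
  rcases ValuationRing.dvd_total ((B : ℤ_[p]) * (p : ℤ_[p]) ^ k') (C * (p : ℤ_[p]) ^ l')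
    with ⟨F, hF⟩ | ⟨F, hF⟩
  · left
    rintro x hx y hy hxf hyf ⟨G, hG⟩
    obtain ⟨D, E, hD, hBC⟩ := key x hx hxf
    obtain ⟨D', E', hD', -⟩ := key y hy hyf
    have hB : (B : ℤ_[p]) ≠ 0 := by
      intro hB
      simp only [hB, zero_mul, mul_eq_zero, hpl, or_false] at hF
      exact hBC (by exact_mod_cast hB) (by exact_mod_cast hF)
    refine ⟨D - D' + F * (E - E') - F * G, mul_left_cancel₀ hB ?_⟩
    linear_combination hD - hD' + (E - E' - G) * hF - C * hG
  · right
    rintro x hx y hy hxf hyf ⟨G, hG⟩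
    obtain ⟨D, E, hD, hBC⟩ := key x hx hxf
    obtain ⟨D', E', hD', -⟩ := key y hy hyf
    have hC : (C : ℤ_[p]) ≠ 0 := by
      intro hC
      simp only [hC, zero_mul, mul_eq_zero, hpk, or_false] at hF
      exact hBC (by exact_mod_cast hF) (by exact_mod_cast hC)
    refine ⟨E - E' + F * (D - D') - F * G, mul_left_cancel₀ hC ?_⟩
    linear_combination hD - hD' + (D - D' - G) * hF - B * hG

open scoped Classical in
theorem card_filter_gridPoint_notMem_farFromRationals_le {T k l : ℕ} (hT : 0 < T)
    (hTkl : T ^ 3 ≤ p ^ (k + l)) (a b : ℕ) (c : ℤ_[p] × ℤ_[p]) :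
    ((Finset.range (p ^ a) ×ˢ Finset.range (p ^ b)).filter
      fun g ↦ gridPoint k l c g ∉ farFromRationals p T (k + a) (l + b)).card ≤
        max (p ^ a) (p ^ b) := by
  rcases injOn_of_near_rationals hT hTkl (Nat.le_add_right k a) (Nat.le_add_right l b) c
    with h | h
  · refine le_max_of_le_right ?_
    refine (Finset.card_le_card_of_injOn (t := Finset.range (p ^ b)) Prod.snd ?_ ?_).trans_eq
      (Finset.card_range _)
    · intro g hg
      simp only [Finset.coe_filter, Finset.mem_product, mem_ofPred_eq] at hg
      exact hg.1.2
    · intro g hg g' hg' hgg'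
      simp only [Finset.coe_filter, Finset.mem_product, Finset.mem_range, mem_ofPred_eq] at hg hg'
      refine Prod.ext (eq_of_pow_add_dvd (p := p) (k := k) hg.1.1 hg'.1.1 ?_) hgg'
      convert! h _ (gridPoint_mem_box k l c g) _ (gridPoint_mem_box k l c g') hg.2 hg'.2
        (by simp [gridPoint, hgg']) using 1
      simp [gridPoint]
  · refine le_max_of_le_left ?_
    refine (Finset.card_le_card_of_injOn (t := Finset.range (p ^ a)) Prod.fst ?_ ?_).trans_eq
      (Finset.card_range _)
    · intro g hg
      simp only [Finset.coe_filter, Finset.mem_product, mem_ofPred_eq] at hg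
      exact hg.1.1
    · intro g hg g' hg' hgg'
      simp only [Finset.coe_filter, Finset.mem_product, Finset.mem_range, mem_ofPred_eq] at hg hg'
      refine Prod.ext hgg' (eq_of_pow_add_dvd (p := p) (k := l) hg.1.2 hg'.1.2 ?_)
      convert! h _ (gridPoint_mem_box k l c g) _ (gridPoint_mem_box k l c g') hg.2 hg'.2
        (by simp [gridPoint, hgg']) using 1
      simp [gridPoint]

theorem exists_weighted_exponents {r₁ r₂ : ℝ} (hr₁ : 0 ≤ r₁) (hr₂ : 0 ≤ r₂) (hsum : r₁ + r₂ = 1)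
    (t : ℕ) : ∃ k l : ℕ → ℕ, (∀ n, k n + l n = 3 * t * n) ∧
      (∀ n, k n + t ≤ k (n + 1)) ∧ (∀ n, l n + t ≤ l (n + 1)) ∧
      (∀ n, (k n : ℝ) ≤ (1 + r₁) * (t * n + 1 : ℕ)) ∧
      ∀ n, (l n : ℝ) ≤ (1 + r₂) * (t * n + 1 : ℕ) := by
  set k : ℕ → ℕ := fun n ↦ ⌊(1 + r₁) * (t * n)⌋₊ with hk
  have h0 : ∀ n : ℕ, 0 ≤ (1 + r₁) * ((t : ℝ) * n) := fun n ↦ by positivity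
  have hle : ∀ n, (k n : ℝ) ≤ (1 + r₁) * (t * n) := fun n ↦ Nat.floor_le (h0 n)
  have hlt : ∀ n, (1 + r₁) * (t * n) < k n + 1 := fun n ↦ Nat.lt_floor_add_one _
  have htn : ∀ n : ℕ, (0 : ℝ) ≤ t * n := fun n ↦ by positivity
  have hk3 : ∀ n, k n ≤ 3 * t * n := fun n ↦ by
    have : (k n : ℝ) ≤ (3 * t * n : ℕ) := by
      push_cast
      nlinarith [hle n, htn n]
    exact_mod_cast this
  have hstep : ∀ n, k n + t ≤ k (n + 1) := fun n ↦ by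
    refine Nat.le_floor ?_
    push_cast
    have : (0 : ℝ) ≤ r₁ * t := by positivity
    nlinarith [hle n]
  have hstep' : ∀ n, k (n + 1) ≤ k n + 2 * t := fun n ↦ by
    refine Nat.lt_succ_iff.1 ?_
    have : (k (n + 1) : ℝ) < (k n + 2 * t + 1 : ℕ) := by
      refine (hle (n + 1)).trans_lt ?_
      push_cast
      have : (0 : ℝ) ≤ r₂ * t := by positivity
      rw [← eq_sub_iff_add_eq'] at hsum
      subst hsum
      nlinarith [hlt n]
    exact_mod_cast this
  refine ⟨k, fun n ↦ 3 * t * n - k n, fun n ↦ Nat.add_sub_cancel' (hk3 n), hstep, fun n ↦ ?_,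
    fun n ↦ ?_, fun n ↦ ?_⟩
  · have h1 := hk3 n
    have h2 := hstep' n
    have h3 : 3 * t * (n + 1) = 3 * t * n + 3 * t := by ring
    simp only
    omega
  · push_cast
    nlinarith [hle n]
  · rw [Nat.cast_sub (hk3 n)]
    push_cast
    rw [← eq_sub_iff_add_eq'] at hsum
    subst hsum
    nlinarith [hlt n]

theorem exists_farFromRationals_notMem_box [MeasurableSpace (ℤ_[p] × ℤ_[p])]
    [BorelSpace (ℤ_[p] × ℤ_[p])] {μ : Measure (ℤ_[p] × ℤ_[p])}
    (hμ : ∀ k l x, μ (box k l x) = ((p : ℝ≥0∞) ^ (k + l))⁻¹) {t : ℕ} (ht : 1 ≤ t)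
    {k l : ℕ → ℕ} (hkl : ∀ n, k n + l n = 3 * t * n) (hk : ∀ n, k n + t ≤ k (n + 1))
    (hl : ∀ n, l n + t ≤ l (n + 1)) {Θ : ℝ≥0∞} (hΘ₁ : 1 ≤ Θ)
    (hΘ : (p : ℝ≥0∞) ^ t ≤ ((p ^ t - 1 : ℕ) : ℝ≥0∞) * Θ) (N : ℕ) (c₀ : ℤ_[p] × ℤ_[p])
    {y : ℕ → ℤ_[p] × ℤ_[p]} {m : ℕ → ℕ}
    (h : ∑' i, μ (box (m i) (m i) (y i)) * Θ ^ m i < μ (box (k N) (l N) c₀)) :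
    ∃ x ∈ box (k N) (l N) c₀,
      (∀ n, N ≤ n → x ∈ farFromRationals p (p ^ (t * n)) (k (n + 1)) (l (n + 1))) ∧
      ∀ i, x ∉ box (m i) (m i) (y i) := by
  classical
  have hp : 0 < p := (Fact.out : p.Prime).pos
  have hnk : ∀ n, n ≤ k n := fun _ ↦
    (strictMono_nat_of_lt_succ fun n ↦ (by have := hk n; omega : k n < k (n + 1))).le_apply
  have hnl : ∀ n, n ≤ l n := fun _ ↦
    (strictMono_nat_of_lt_succ fun n ↦ (by have := hl n; omega : l n < l (n + 1))).le_apply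
  have hka : ∀ n, k (n + 1) = k n + (k (n + 1) - k n) := fun n ↦ by have := hk n; omega
  have hlb : ∀ n, l (n + 1) = l n + (l (n + 1) - l n) := fun n ↦ by have := hl n; omega
  have hgood : ∀ n c, (p : ℝ≥0∞) ^ (k (n + 1) - k n + (l (n + 1) - l n)) ≤
      ((Finset.range (p ^ (k (n + 1) - k n)) ×ˢ Finset.range (p ^ (l (n + 1) - l n))).filter
        fun g ↦ gridPoint (k n) (l n) c g ∈
          farFromRationals p (p ^ (t * n)) (k (n + 1)) (l (n + 1))).card * Θ := by
    intro n c
    have hbad := card_filter_gridPoint_notMem_farFromRationals_le (p := p) (T := p ^ (t * n))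
      (k := k n) (l := l n) (by positivity)
      (by rw [hkl, ← pow_mul, show t * n * 3 = 3 * t * n by ring])
      (k (n + 1) - k n) (l (n + 1) - l n) c
    rw [← hka, ← hlb] at hbad
    have hab : k (n + 1) - k n + (l (n + 1) - l n) = 3 * t := by
      have h1 := hk n
      have h2 := hl n
      have h3 := hkl n
      have h4 := hkl (n + 1)
      have h5 : 3 * t * (n + 1) = 3 * t * n + 3 * t := by ring
      omega
    have hmax : max (p ^ (k (n + 1) - k n)) (p ^ (l (n + 1) - l n)) ≤ p ^ (2 * t) := by
      have h1 := hk n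
      have h2 := hl n
      exact max_le (Nat.pow_le_pow_right hp (by omega)) (Nat.pow_le_pow_right hp (by omega))
    have hcard := Finset.card_filter_add_card_filter_not
      (s := Finset.range (p ^ (k (n + 1) - k n)) ×ˢ Finset.range (p ^ (l (n + 1) - l n)))
      (fun g ↦ gridPoint (k n) (l n) c g ∈
        farFromRationals p (p ^ (t * n)) (k (n + 1)) (l (n + 1)))
    rw [Finset.card_product, Finset.card_range, Finset.card_range, ← pow_add, hab] at hcard
    have hpow : p ^ (3 * t) = p ^ (2 * t) * (p ^ t - 1) + p ^ (2 * t) := by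
      rw [← Nat.mul_succ, Nat.succ_eq_add_one, Nat.sub_add_cancel (Nat.one_le_pow _ _ hp),
        ← pow_add]
      ring
    have hgood : p ^ (2 * t) * (p ^ t - 1) ≤
        ((Finset.range (p ^ (k (n + 1) - k n)) ×ˢ Finset.range (p ^ (l (n + 1) - l n))).filter
          fun g ↦ gridPoint (k n) (l n) c g ∈
            farFromRationals p (p ^ (t * n)) (k (n + 1)) (l (n + 1))).card := by
      have := hbad.trans hmax
      omega
    rw [hab]
    calc (p : ℝ≥0∞) ^ (3 * t) = (p : ℝ≥0∞) ^ (2 * t) * (p : ℝ≥0∞) ^ t := by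
          rw [← pow_add]
          ring
      _ ≤ (p : ℝ≥0∞) ^ (2 * t) * (((p ^ t - 1 : ℕ) : ℝ≥0∞) * Θ) := by gcongr
      _ = ((p ^ (2 * t) * (p ^ t - 1) : ℕ) : ℝ≥0∞) * Θ := by
          rw [Nat.cast_mul, Nat.cast_pow, mul_assoc]
      _ ≤ _ := by gcongr
  obtain ⟨x, hx, hfar, hbox⟩ :=
    exists_mem_box_forall_notMem_box hμ hka hlb hnk hnl hΘ₁ hgood N c₀ h
  refine ⟨x, hx, fun n hn ↦ ?_, hbox⟩
  obtain ⟨c, hc, hxc⟩ := hfar n hn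
  exact farFromRationals_of_mem_box hc hxc

theorem rpow_one_add_le_zpow_neg {P x r : ℝ} {e k : ℕ} (hP : 1 ≤ P) (hx₀ : 0 ≤ x)
    (hx : x ≤ (P ^ e)⁻¹) (hr : 0 ≤ r) (hk : (k : ℝ) ≤ (1 + r) * e) :
    x ^ (1 + r) ≤ P ^ (-k : ℤ) := by
  have hP0 : 0 ≤ P := zero_le_one.trans hP
  calc x ^ (1 + r) ≤ ((P ^ e)⁻¹) ^ (1 + r) := Real.rpow_le_rpow hx₀ hx (by linarith)
    _ = P ^ (-((1 + r) * e)) := by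
      rw [← Real.rpow_natCast, ← Real.rpow_neg hP0, ← Real.rpow_mul hP0]
      ring_nf
    _ ≤ P ^ (-k : ℝ) := Real.rpow_le_rpow_of_exponent_le hP (neg_le_neg hk)
    _ = P ^ (-k : ℤ) := by
      rw [← Real.rpow_intCast]
      push_cast
      rfl

theorem exists_coprime_denominator {x : ℤ_[p] × ℤ_[p]} {z₁ z₂ : ℤ} {q : ℕ} (hq : 1 ≤ q)
    (h₁ : ‖(x.1 : ℚ_[p]) - (z₁ : ℚ_[p]) / (q : ℚ_[p])‖ ≤ 1)
    (h₂ : ‖(x.2 : ℚ_[p]) - (z₂ : ℚ_[p]) / (q : ℚ_[p])‖ ≤ 1) :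
    ∃ q' w₁ w₂ : ℤ, ¬(p : ℤ) ∣ q' ∧ |q'| ≤ q ∧ |w₁| ≤ |z₁| ∧ |w₂| ≤ |z₂| ∧
      ‖(x.1 : ℚ_[p]) - (z₁ : ℚ_[p]) / (q : ℚ_[p])‖ = ‖(q' : ℤ_[p]) * x.1 - w₁‖ ∧
      ‖(x.2 : ℚ_[p]) - (z₂ : ℚ_[p]) / (q : ℚ_[p])‖ = ‖(q' : ℤ_[p]) * x.2 - w₂‖ := by
  have hp : p.Prime := Fact.out
  obtain ⟨j, q', hpq', rfl⟩ := Nat.exists_eq_pow_mul_and_not_dvd (n := q) (by omega) p hp.ne_one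
  have hq'0 : q' ≠ 0 := fun h0 ↦ hpq' (h0 ▸ dvd_zero _)
  have hpj : 1 ≤ p ^ j := Nat.one_le_pow _ _ hp.pos
  have hpQ : (p : ℚ_[p]) ≠ 0 := Nat.cast_ne_zero.2 hp.ne_zero
  have hq'n : ‖((q' : ℤ) : ℚ_[p])‖ = 1 :=
    le_antisymm (Padic.norm_int_le_one _)
      (not_lt.1 (mt Padic.norm_intCast_lt_one_iff.1 (by exact_mod_cast hpq')))
  have key : ∀ (y : ℤ_[p]) (z : ℤ),
      ‖(y : ℚ_[p]) - (z : ℚ_[p]) / ((p ^ j * q' : ℕ) : ℚ_[p])‖ ≤ 1 → ∃ w : ℤ, |w| ≤ |z| ∧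
        ‖(y : ℚ_[p]) - (z : ℚ_[p]) / ((p ^ j * q' : ℕ) : ℚ_[p])‖ =
          ‖((q' : ℤ) : ℤ_[p]) * y - w‖ := by
    intro y z h
    have hz : ‖(z : ℚ_[p]) / ((p ^ j * q' : ℕ) : ℚ_[p])‖ ≤ 1 := by
      rw [← sub_sub_cancel (y : ℚ_[p]) (z / _), sub_eq_add_neg]
      exact (Padic.nonarchimedean _ _).trans (max_le y.norm_le_one (by rwa [norm_neg]))
    obtain ⟨w, rfl⟩ : ((p ^ j : ℕ) : ℤ) ∣ z := by
      rw [Nat.cast_pow, ← Padic.norm_int_le_pow_iff_dvd]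
      rw [norm_div, div_le_one₀ (norm_pos_iff.2 (by push_cast; positivity))] at hz
      push_cast at hz hq'n ⊢
      simpa [hq'n] using hz
    refine ⟨w, ?_, ?_⟩
    · rw [abs_mul, Nat.abs_cast]
      exact le_mul_of_one_le_left (abs_nonneg _) (by exact_mod_cast hpj)
    · rw [norm_def]
      calc _ = ‖((q' : ℤ) : ℚ_[p])‖ *
            ‖(y : ℚ_[p]) - ((p ^ j : ℕ) * w : ℤ) / ((p ^ j * q' : ℕ))‖ := by
            rw [hq'n, one_mul]
        _ = _ := by
            rw [← norm_mul]
            congr 1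
            push_cast
            field_simp
  obtain ⟨w₁, hw₁, e₁⟩ := key x.1 z₁ h₁
  obtain ⟨w₂, hw₂, e₂⟩ := key x.2 z₂ h₂
  refine ⟨q', w₁, w₂, by exact_mod_cast hpq', ?_, hw₁, hw₂, e₁, e₂⟩
  rw [Nat.abs_cast]
  exact_mod_cast Nat.le_mul_of_pos_left q' hpj

theorem exists_pos_rpow_le_of_farFromRationals {r₁ r₂ : ℝ} (hr₁ : 0 ≤ r₁) (hr₂ : 0 ≤ r₂)
    {t : ℕ} (ht : 1 ≤ t) {k l : ℕ → ℕ} (hk : ∀ n, (k n : ℝ) ≤ (1 + r₁) * (t * n + 1 : ℕ))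
    (hl : ∀ n, (l n : ℝ) ≤ (1 + r₂) * (t * n + 1 : ℕ)) {N : ℕ} {x : ℤ_[p] × ℤ_[p]}
    (hx : ∀ n, N ≤ n → x ∈ farFromRationals p (p ^ (t * n)) (k (n + 1)) (l (n + 1))) :
    ∃ c : ℝ, 0 < c ∧ ∀ z₁ z₂ : ℤ, ∀ q : ℕ, 1 ≤ q →
      ((c / max (max |(z₁ : ℝ)| |(z₂ : ℝ)|) (q : ℝ)) ^ (1 + r₁) ≤
          ‖(x.1 : ℚ_[p]) - (z₁ : ℚ_[p]) / (q : ℚ_[p])‖ ∨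
        (c / max (max |(z₁ : ℝ)| |(z₂ : ℝ)|) (q : ℝ)) ^ (1 + r₂) ≤
          ‖(x.2 : ℚ_[p]) - (z₂ : ℚ_[p]) / (q : ℚ_[p])‖) := by
  have hp : p.Prime := Fact.out
  have hp1 : (1 : ℝ) ≤ p := by exact_mod_cast hp.one_le
  refine ⟨((p : ℝ) ^ (t * (N + 2) + 1))⁻¹ / 2, by positivity, fun z₁ z₂ q hq ↦ ?_⟩
  set H : ℝ := max (max |(z₁ : ℝ)| |(z₂ : ℝ)|) (q : ℝ) with hH
  set c : ℝ := ((p : ℝ) ^ (t * (N + 2) + 1))⁻¹ / 2 with hc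
  have hc0 : 0 < c := by positivity
  have hqH : (q : ℝ) ≤ H := le_max_right _ _
  have hz₁H : |(z₁ : ℝ)| ≤ H := (le_max_left _ _).trans (le_max_left _ _)
  have hz₂H : |(z₂ : ℝ)| ≤ H := (le_max_right _ _).trans (le_max_left _ _)
  have hH1 : 1 ≤ H := le_trans (by exact_mod_cast hq) hqH
  have hcH : c / H ≤ 1 := by
    rw [div_le_one₀ (by linarith)]
    have : ((p : ℝ) ^ (t * (N + 2) + 1))⁻¹ ≤ 1 := inv_le_one_of_one_le₀ (one_le_pow₀ hp1)
    linarith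
  have hcH0 : 0 ≤ c / H := by positivity
  by_contra! hcon
  obtain ⟨q', w₁, w₂, hpq', hq', hw₁, hw₂, e₁, e₂⟩ := exists_coprime_denominator hq
    (hcon.1.le.trans (Real.rpow_le_one hcH0 hcH (by linarith)))
    (hcon.2.le.trans (Real.rpow_le_one hcH0 hcH (by linarith)))
  have hex : ∃ j : ℕ, 2 * H ≤ (p : ℝ) ^ (t * (N + j)) := by
    obtain ⟨j, hj⟩ := pow_unbounded_of_one_lt (2 * H)
      (show (1 : ℝ) < p by exact_mod_cast hp.one_lt)
    refine ⟨j, hj.le.trans (pow_le_pow_right₀ hp1 ?_)⟩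
    nlinarith
  obtain ⟨n, hNn, hn, hn'⟩ : ∃ n, N ≤ n ∧ 2 * H ≤ (p : ℝ) ^ (t * n) ∧
      (p : ℝ) ^ (t * n) ≤ 2 * H * (p : ℝ) ^ (t * (N + 1)) := by
    classical
    refine ⟨N + Nat.find hex, Nat.le_add_right _ _, Nat.find_spec hex, ?_⟩
    have hpN : (1 : ℝ) ≤ (p : ℝ) ^ (t * N) := one_le_pow₀ hp1
    have hpt : (1 : ℝ) ≤ (p : ℝ) ^ t := one_le_pow₀ hp1
    rw [mul_add_one, pow_add]
    rcases hj : Nat.find hex with _ | j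
    · rw [add_zero]
      nlinarith [mul_le_mul hpN hpt zero_le_one (by positivity)]
    · have hlt := Nat.find_min hex (m := j) (by omega)
      rw [not_le] at hlt
      rw [← add_assoc, mul_add_one, pow_add]
      calc (p : ℝ) ^ (t * (N + j)) * (p : ℝ) ^ t ≤ 2 * H * (p : ℝ) ^ t := by gcongr
        _ = 2 * H * (1 * (p : ℝ) ^ t) := by ring
        _ ≤ _ := by gcongr
  have hcn : c / H ≤ ((p : ℝ) ^ (t * (n + 1) + 1))⁻¹ := by
    have hsplit : t * (N + 2) + 1 = t * (N + 1) + (t + 1) := by ring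
    have hsplit' : t * (n + 1) + 1 = t * n + (t + 1) := by ring
    have hH0 : 0 < H := by linarith
    have hpp : (0 : ℝ) < p := by linarith
    rw [hc, hsplit, hsplit', pow_add, pow_add _ (t * n), _root_.mul_inv, _root_.mul_inv, div_div,
      div_eq_mul_inv, mul_right_comm]
    gcongr
    rw [← _root_.mul_inv]
    gcongr
    linarith
  have hbound : ∀ {y : ℤ}, |(y : ℝ)| ≤ H → 2 * |y| ≤ ((p ^ (t * n) : ℕ) : ℤ) := by
    intro y hy
    have : (2 * |y| : ℝ) ≤ ((p ^ (t * n) : ℕ) : ℝ) := by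
      push_cast
      linarith
    exact_mod_cast this
  refine hx n hNn q' w₁ w₂ (hbound ?_) (hbound ?_) (hbound ?_) hpq' ⟨?_, ?_⟩
  · exact le_trans (by exact_mod_cast hq') hqH
  · exact le_trans (by exact_mod_cast hw₁) hz₁H
  · exact le_trans (by exact_mod_cast hw₂) hz₂H
  · rw [pow_dvd_iff_norm_le, ← e₁]
    exact hcon.1.le.trans (rpow_one_add_le_zpow_neg hp1 hcH0 hcn hr₁ (hk _))
  · rw [pow_dvd_iff_norm_le, ← e₂]
    exact hcon.2.le.trans (rpow_one_add_le_zpow_neg hp1 hcH0 hcn hr₂ (hl _))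

theorem ediam_box_le (m : ℕ) (x : ℤ_[p] × ℤ_[p]) :
    Metric.ediam (box m m x) ≤ ((p : ℝ≥0∞) ^ m)⁻¹ := by
  have hp : (0 : ℝ) < p := Nat.cast_pos.2 (Fact.out : p.Prime).pos
  refine Metric.ediam_le fun y hy z hz ↦ ?_
  have hyz := box_subset_box le_rfl le_rfl (self_mem_box m m z) hz hy
  rw [box_self_eq_closedBall, Metric.mem_closedBall] at hyz
  rw [edist_dist]
  refine (ENNReal.ofReal_le_ofReal hyz).trans_eq ?_
  rw [zpow_neg, zpow_natCast, ENNReal.ofReal_inv_of_pos (by positivity),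
    ENNReal.ofReal_pow hp.le, ENNReal.ofReal_natCast]

theorem exists_subset_box {s : ℝ} (hs : 0 < s) (E : Set (ℤ_[p] × ℤ_[p])) {ε : ℝ≥0∞}
    (hε : 0 < ε) : ∃ (y : ℤ_[p] × ℤ_[p]) (m : ℕ), E ⊆ box m m y ∧
      (((p : ℝ≥0∞) ^ m)⁻¹) ^ s ≤
        (p : ℝ≥0∞) ^ s * (⨆ _ : E.Nonempty, Metric.ediam E ^ s) + ε := by
  have hp : p.Prime := Fact.out
  have hp0 : (p : ℝ≥0∞) ≠ 0 := Nat.cast_ne_zero.2 hp.ne_zero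
  rcases E.subsingleton_or_nontrivial with hE | hE
  · obtain ⟨m, hm⟩ : ∃ m : ℕ, (((p : ℝ≥0∞) ^ m)⁻¹) ^ s ≤ ε := by
      have h1 : ((p : ℝ≥0∞)⁻¹) ^ s < 1 :=
        ENNReal.rpow_lt_one (ENNReal.inv_lt_one.2 (by exact_mod_cast hp.one_lt)) hs
      obtain ⟨m, hm⟩ := ((ENNReal.tendsto_pow_atTop_nhds_zero_of_lt_one h1).eventually_lt_const
        hε).exists
      refine ⟨m, le_of_eq_of_le ?_ hm.le⟩
      rw [ENNReal.inv_pow, ← ENNReal.rpow_natCast, ← ENNReal.rpow_natCast, ← ENNReal.rpow_mul,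
        ← ENNReal.rpow_mul, mul_comm]
    rcases hE.eq_empty_or_singleton with rfl | ⟨y, rfl⟩
    · exact ⟨0, m, empty_subset _, hm.trans le_add_self⟩
    · exact ⟨y, m, singleton_subset_iff.2 (self_mem_box _ _ _), hm.trans le_add_self⟩
  · obtain ⟨y, hy⟩ := hE.nonempty
    have hbdd : Bornology.IsBounded E := Metric.isBounded_of_compactSpace
    have htop := hbdd.ediam_ne_top
    have hpos : 0 < Metric.diam E := ENNReal.toReal_pos (Metric.ediam_pos_iff.2 hE).ne' htop
    have hle : Metric.diam E ≤ 1 := by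
      refine Metric.diam_le_of_forall_dist_le zero_le_one fun a _ b _ ↦ ?_
      rw [dist_eq_norm]
      exact max_le (norm_le_one _) (norm_le_one _)
    have hpR : (0 : ℝ) < p := Nat.cast_pos.2 hp.pos
    obtain ⟨m, hm, hm'⟩ := exists_nat_pow_near_of_lt_one hpos hle (inv_pos.2 hpR)
      (inv_lt_one_of_one_lt₀ (by exact_mod_cast hp.one_lt))
    refine ⟨y, m, fun z hz ↦ ?_, ?_⟩
    · rw [box_self_eq_closedBall, Metric.mem_closedBall, zpow_neg, zpow_natCast, ← inv_pow]
      exact (Metric.dist_le_diam_of_mem hbdd hz hy).trans hm'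
    · rw [ciSup_pos hE.nonempty, ← ENNReal.mul_rpow_of_nonneg _ _ hs.le]
      refine le_add_right (ENNReal.rpow_le_rpow ?_ hs.le)
      have h1 : ((p : ℝ≥0∞) ^ (m + 1))⁻¹ ≤ Metric.ediam E := by
        rw [← ENNReal.ofReal_toReal htop]
        refine le_of_eq_of_le ?_ (ENNReal.ofReal_le_ofReal hm.le)
        rw [inv_pow, ENNReal.ofReal_inv_of_pos (by positivity), ENNReal.ofReal_pow hpR.le,
          ENNReal.ofReal_natCast]
      calc ((p : ℝ≥0∞) ^ m)⁻¹ = p * ((p : ℝ≥0∞) ^ (m + 1))⁻¹ := by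
            rw [pow_succ', ENNReal.mul_inv (Or.inl hp0) (Or.inl (ENNReal.natCast_ne_top p)),
              ← mul_assoc, ENNReal.mul_inv_cancel hp0 (ENNReal.natCast_ne_top p), one_mul]
        _ ≤ _ := by gcongr

theorem dimH_univ_le_two : dimH (univ : Set (ℤ_[p] × ℤ_[p])) ≤ 2 := by
  have hp : p.Prime := Fact.out
  have hp0 : (p : ℝ≥0∞) ≠ 0 := Nat.cast_ne_zero.2 hp.ne_zero
  borelize (ℤ_[p] × ℤ_[p])
  refine dimH_le_of_hausdorffMeasure_ne_top (d := 2) (ne_top_of_le_ne_top ENNReal.one_ne_top ?_)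
  have hr : Tendsto (fun n : ℕ ↦ ((p : ℝ≥0∞) ^ n)⁻¹) atTop (𝓝 0) := by
    simp_rw [ENNReal.inv_pow]
    exact ENNReal.tendsto_pow_atTop_nhds_zero_of_lt_one
      (ENNReal.inv_lt_one.2 (by exact_mod_cast hp.one_lt))
  refine (Measure.hausdorffMeasure_le_liminf_sum (ι := fun n ↦ Fin (p ^ n) × Fin (p ^ n)) _ univ
    _ hr (fun n g ↦ box n n (gridPoint 0 0 0 ((g.1 : ℕ), (g.2 : ℕ))))
    (Eventually.of_forall fun n g ↦ ediam_box_le _ _) (Eventually.of_forall fun n ↦ ?_)).trans ?_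
  · rw [← iUnion_box_gridPoint_zero n n]
    refine iUnion₂_subset fun g hg ↦ ?_
    simp only [Finset.mem_product, Finset.mem_range] at hg
    exact subset_iUnion_of_subset (⟨g.1, hg.1⟩, ⟨g.2, hg.2⟩) Subset.rfl
  · refine (liminf_le_liminf (v := fun _ ↦ (1 : ℝ≥0∞)) (Eventually.of_forall fun n ↦ ?_)).trans
      (by simp)
    calc _ ≤ ∑ _g : Fin (p ^ n) × Fin (p ^ n), (((p : ℝ≥0∞) ^ n)⁻¹) ^ ((2 : ℝ≥0) : ℝ) := by
          gcongr
          exact ediam_box_le _ _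
      _ = 1 := by
          simp only [Finset.sum_const, Finset.card_univ, Fintype.card_prod, Fintype.card_fin,
            nsmul_eq_mul, NNReal.coe_ofNat, ENNReal.rpow_ofNat, Nat.cast_mul, Nat.cast_pow]
          rw [← sq, ← mul_pow, ENNReal.mul_inv_cancel (pow_ne_zero _ hp0)
            (ENNReal.pow_ne_top (ENNReal.natCast_ne_top p)), one_pow]

/-- Exponential growth beats a fixed proportion: for `Θ > 1` and `t` large, `pᵗ ≤ (pᵗ - 1) Θ`. -/
theorem exists_pow_le_pow_sub_one_mul (p : ℕ) [Fact p.Prime] {Θ : ℝ≥0∞} (hΘ : 1 < Θ) :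
    ∃ t : ℕ, 1 ≤ t ∧ (p : ℝ≥0∞) ^ t ≤ ((p ^ t - 1 : ℕ) : ℝ≥0∞) * Θ := by
  have hp : p.Prime := Fact.out
  obtain ⟨θ, hθ, hθΘ⟩ := ENNReal.lt_iff_exists_nnreal_btwn.1 hΘ
  have hθ1 : 1 < θ := by exact_mod_cast hθ
  have hθ1' : (1 : ℝ) < θ := by exact_mod_cast hθ1
  obtain ⟨t, ht⟩ := pow_unbounded_of_one_lt ((θ : ℝ) / (θ - 1))
    (show (1 : ℝ) < p by exact_mod_cast hp.one_lt)
  rw [div_lt_iff₀ (by linarith)] at ht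
  have ht0 : t ≠ 0 := by
    rintro rfl
    linarith
  refine ⟨t, Nat.one_le_iff_ne_zero.2 ht0, le_trans ?_ (mul_le_mul_right hθΘ.le _)⟩
  have : (p : ℝ≥0) ^ t ≤ ((p ^ t - 1 : ℕ) : ℝ≥0) * θ := by
    rw [← NNReal.coe_le_coe]
    rw [NNReal.coe_mul, NNReal.coe_natCast, Nat.cast_sub (Nat.one_le_pow _ _ hp.pos)]
    push_cast
    linarith
  exact_mod_cast this

/-- The set of `(r₁, r₂)`-badly approximable points of `ℤ_p²`. -/
def weightedBad (p : ℕ) [Fact p.Prime] (r₁ r₂ : ℝ) : Set (ℤ_[p] × ℤ_[p]) :=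
  {x | ∃ c : ℝ, 0 < c ∧ ∀ z₁ z₂ : ℤ, ∀ q : ℕ, 1 ≤ q →
    ((c / max (max |(z₁ : ℝ)| |(z₂ : ℝ)|) (q : ℝ)) ^ (1 + r₁) ≤
        ‖(x.1 : ℚ_[p]) - (z₁ : ℚ_[p]) / (q : ℚ_[p])‖ ∨
      (c / max (max |(z₁ : ℝ)| |(z₂ : ℝ)|) (q : ℝ)) ^ (1 + r₂) ≤
        ‖(x.2 : ℚ_[p]) - (z₂ : ℚ_[p]) / (q : ℚ_[p])‖)}

theorem hausdorffMeasure_weightedBad_inter_box_ne_zero [MeasurableSpace (ℤ_[p] × ℤ_[p])]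
    [BorelSpace (ℤ_[p] × ℤ_[p])] {r₁ r₂ : ℝ} (hr₁ : 0 ≤ r₁) (hr₂ : 0 ≤ r₂) (hsum : r₁ + r₂ = 1)
    {s : ℝ} (hs : 0 < s) (hs2 : s < 2) (N : ℕ) (c₀ : ℤ_[p] × ℤ_[p]) :
    Measure.hausdorffMeasure s (weightedBad p r₁ r₂ ∩ box N N c₀) ≠ 0 := by
  have hp : p.Prime := Fact.out
  have hp0 : (p : ℝ≥0∞) ≠ 0 := Nat.cast_ne_zero.2 hp.ne_zero
  have hpt : (p : ℝ≥0∞) ≠ ⊤ := ENNReal.natCast_ne_top p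
  obtain ⟨μ, hμ⟩ := exists_measure_box_eq (p := p)
  have hΘ : 1 < (p : ℝ≥0∞) ^ (2 - s) :=
    ENNReal.one_lt_rpow (by exact_mod_cast hp.one_lt) (by linarith)
  have hμΘ : ∀ (m : ℕ) (y : ℤ_[p] × ℤ_[p]),
      μ (box m m y) * ((p : ℝ≥0∞) ^ (2 - s)) ^ m = (((p : ℝ≥0∞) ^ m)⁻¹) ^ s := by
    intro m y
    rw [hμ, ← ENNReal.rpow_natCast, ← ENNReal.rpow_natCast, ← ENNReal.rpow_natCast,
      ← ENNReal.rpow_neg, ← ENNReal.rpow_neg, ← ENNReal.rpow_mul, ← ENNReal.rpow_mul,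
      ← ENNReal.rpow_add _ _ hp0 hpt]
    congr 1
    push_cast
    ring
  obtain ⟨t, ht, htΘ⟩ := exists_pow_le_pow_sub_one_mul p hΘ
  obtain ⟨k, l, hkl, hk, hl, hkr, hlr⟩ := exists_weighted_exponents hr₁ hr₂ hsum t
  have hNk : ∀ n, n ≤ k n := fun _ ↦
    (strictMono_nat_of_lt_succ fun n ↦ (by have := hk n; omega : k n < k (n + 1))).le_apply
  have hNl : ∀ n, n ≤ l n := fun _ ↦
    (strictMono_nat_of_lt_succ fun n ↦ (by have := hl n; omega : l n < l (n + 1))).le_apply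
  set δ := μ (box (k N) (l N) c₀) with hδ
  have hδ0 : δ ≠ 0 := by
    rw [hδ, hμ]
    exact ENNReal.inv_ne_zero.2 (ENNReal.pow_ne_top hpt)
  have hδ2 : 0 < δ / 2 := ENNReal.half_pos hδ0
  have hps0 : (p : ℝ≥0∞) ^ s ≠ 0 := by simp [ENNReal.rpow_eq_zero_iff, hp0, hpt]
  have hpst : (p : ℝ≥0∞) ^ s ≠ ⊤ := ENNReal.rpow_ne_top_of_nonneg hs.le hpt
  intro hzero
  rw [Measure.hausdorffMeasure_apply] at hzero
  have hlt := (le_of_eq (iSup₂_eq_bot.1 hzero 1 one_pos)).trans_lt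
    (ENNReal.div_pos hδ2.ne' hpst)
  simp only [iInf_lt_iff] at hlt
  obtain ⟨E, hcover, -, hE⟩ := hlt
  obtain ⟨ε, hε, hεδ⟩ := ENNReal.exists_pos_sum_of_countable' hδ2.ne' ℕ
  choose y m hEbox hm using fun i ↦ exists_subset_box hs (E i) (hε i)
  have hsmall : ∑' i, μ (box (m i) (m i) (y i)) * ((p : ℝ≥0∞) ^ (2 - s)) ^ m i < δ := by
    calc _ ≤ ∑' i, ((p : ℝ≥0∞) ^ s * (⨆ _ : (E i).Nonempty, Metric.ediam (E i) ^ s) + ε i) :=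
          ENNReal.tsum_le_tsum fun i ↦ (hμΘ _ _).trans_le (hm i)
      _ = (p : ℝ≥0∞) ^ s * ∑' i, (⨆ _ : (E i).Nonempty, Metric.ediam (E i) ^ s) +
          ∑' i, ε i := by rw [ENNReal.tsum_add, ENNReal.tsum_mul_left]
      _ < δ / 2 + δ / 2 := by
        refine ENNReal.add_lt_add ?_ hεδ
        rw [mul_comm]
        exact (ENNReal.lt_div_iff_mul_lt (Or.inl hps0) (Or.inl hpst)).1 hE
      _ = δ := ENNReal.add_halves δ
  obtain ⟨x, hx, hfar, hnot⟩ :=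
    exists_farFromRationals_notMem_box hμ ht hkl hk hl hΘ.le htΘ N c₀ hsmall
  have hxbox : x ∈ box N N c₀ :=
    box_subset_box (hNk N) (hNl N) (self_mem_box _ _ _) (self_mem_box _ _ _) hx
  obtain ⟨i, hi⟩ := mem_iUnion.1 (hcover
    ⟨exists_pos_rpow_le_of_farFromRationals hr₁ hr₂ ht hkr hlr hfar, hxbox⟩)
  exact hnot i (hEbox i hi)

theorem dimH_weightedBad_inter_eq_two {r₁ r₂ : ℝ} (hr₁ : 0 ≤ r₁) (hr₂ : 0 ≤ r₂)
    (hsum : r₁ + r₂ = 1) {U : Set (ℤ_[p] × ℤ_[p])} (hU : IsOpen U) (hUne : U.Nonempty) :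
    dimH (weightedBad p r₁ r₂ ∩ U) = 2 := by
  refine le_antisymm ((dimH_mono (subset_univ _)).trans dimH_univ_le_two) ?_
  obtain ⟨c₀, hc₀⟩ := hUne
  obtain ⟨δ, hδ, hball⟩ := Metric.isOpen_iff.1 hU c₀ hc₀
  obtain ⟨N, hN⟩ := exists_pow_neg_lt p hδ
  have hbox : box N N c₀ ⊆ U := by
    rw [box_self_eq_closedBall]
    exact (Metric.closedBall_subset_ball hN).trans hball
  refine (ENNReal.le_of_forall_nnreal_lt fun s hs ↦ ?_).trans
    (dimH_mono (inter_subset_inter_right _ hbox))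
  rcases eq_or_ne s 0 with rfl | hs0
  · simp
  borelize (ℤ_[p] × ℤ_[p])
  exact le_dimH_of_hausdorffMeasure_ne_zero (hausdorffMeasure_weightedBad_inter_box_ne_zero hr₁ hr₂
    hsum (NNReal.coe_pos.2 (pos_iff_ne_zero.2 hs0)) (by exact_mod_cast hs) N c₀)

end PadicInt

/-- The set of `r̄`-badly approximable vectors in `ℤ_p²` is
thick: its intersection with every nonempty open subset of `ℤ_p²` has Hausdorff
dimension 2. -/
theorem stmt14 (p : ℕ) [Fact p.Prime]
    (r₁ r₂ : ℝ) (hr₁ : 0 ≤ r₁) (hr₂ : 0 ≤ r₂) (hsum : r₁ + r₂ = 1)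
    (U : Set (ℤ_[p] × ℤ_[p])) (hU : IsOpen U) (hUne : U.Nonempty) :
    dimH ({x : ℤ_[p] × ℤ_[p] | ∃ c : ℝ, 0 < c ∧
        ∀ z₁ z₂ : ℤ, ∀ q : ℕ, 1 ≤ q →
          ((c / max (max |(z₁ : ℝ)| |(z₂ : ℝ)|) (q : ℝ)) ^ (1 + r₁) ≤
              ‖(x.1 : ℚ_[p]) - (z₁ : ℚ_[p]) / (q : ℚ_[p])‖ ∨
            (c / max (max |(z₁ : ℝ)| |(z₂ : ℝ)|) (q : ℝ)) ^ (1 + r₂) ≤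
              ‖(x.2 : ℚ_[p]) - (z₂ : ℚ_[p]) / (q : ℚ_[p])‖)} ∩ U)
      = (2 : ENNReal) :=
  PadicInt.dimH_weightedBad_inter_eq_two hr₁ hr₂ hsum hU hUne
end

section
/- Let n ≥ 1, let (M_k)_{k ∈ ℕ} be a sequence of matrices M_k ∈ GL(n, ℝ) with operator norms t_k = ‖M_k‖, and let (Z_k)_{k ∈ ℕ} be a sequence of nonempty τ_k-separated subsets of ℝⁿ (τ_k > 0). Assume that the set { log(t_k/τ_k) : k ∈ ℕ } is discrete and bounded below, and that there exists δ̄ < 1 such that for all t ∈ ℝ and all b > 0, the cardinality of { k ∈ ℕ : t − b < log(t_k/τ_k) ≤ t } is at most e^{δ̄ b}. Define E = { x ∈ ℝⁿ : ∃ c > 0 such that dist(M_k x, Z_k) ≥ c τ_k for all k ∈ ℕ }. Then for every nonempty open set U ⊆ ℝⁿ, the Hausdorff dimension of E ∩ U equals n. -/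
open Metric Set

/-- Follows the digits `ω` down a tree in which `F j x` lists the children at depth `j + 1` of a
point `x` at depth `j`. -/
def treeCenter {X : Type*} {P : ℕ} (F : ℕ → X → Fin P → X) (x₀ : X) (ω : ℕ → Fin P) : ℕ → X
  | 0 => x₀
  | j + 1 => F j (treeCenter F x₀ ω j) (ω j)

theorem treeCenter_congr {X : Type*} {P : ℕ} (F : ℕ → X → Fin P → X) (x₀ : X) {ω ω' : ℕ → Fin P}
    {j : ℕ} (h : ∀ i < j, ω i = ω' i) : treeCenter F x₀ ω j = treeCenter F x₀ ω' j := by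
  induction j with
  | zero => rfl
  | succ j ih =>
    simp only [treeCenter]
    rw [ih fun i hi => h i (by omega), h j (by omega)]

/-- A set parametrized by digit sequences in base `P`, such that sequences which first differ at
position `j` give points at distance at least `r / R ^ (j + 1)`, has Hausdorff dimension at least
`log P / log R`. -/
theorem le_dimH_range_of_separated {X : Type*} [MetricSpace X] {R r : ℝ} (hR : 1 < R) (hr : 0 < r)
    {P : ℕ} (hP : 1 < P) {s : NNReal} (hs : 0 < s) (hPs : R ^ (s : ℝ) ≤ P)
    (φ : (ℕ → Fin P) → X)
    (hφ : ∀ ω ω' j, (∀ i < j, ω i = ω' i) → ω j ≠ ω' j →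
      r / R ^ (j + 1) ≤ dist (φ ω) (φ ω')) :
    (s : ENNReal) ≤ dimH (range φ) := by
  have hR0 : 0 < R := by linarith
  have hne : ∀ ω ω' : ℕ → Fin P, ω ≠ ω' → ∃ j, (∀ i < j, ω i = ω' i) ∧ ω j ≠ ω' j := by
    intro ω ω' h
    have h' := Function.ne_iff.1 h
    classical
    exact ⟨Nat.find h', fun i hi => not_not.1 (Nat.find_min h' hi), Nat.find_spec h'⟩
  have hinj : Function.Injective φ := by
    intro ω ω' h
    by_contra hω
    obtain ⟨j, hj, hj'⟩ := hne ω ω' hω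
    have := hφ ω ω' j hj hj'
    rw [h, dist_self] at this
    have : 0 < r / R ^ (j + 1) := by positivity
    linarith
  have : Nonempty (ℕ → Fin P) := ⟨fun _ => ⟨0, by omega⟩⟩
  let g : X → ℝ := fun x => Real.ofDigits (Function.invFun φ x)
  have hg : ∀ ω, g (φ ω) = Real.ofDigits ω := fun ω => by
    simp [g, Function.leftInverse_invFun hinj ω]
  have himg : Icc (0 : ℝ) 1 ⊆ g '' range φ := by
    intro y hy
    obtain ⟨ω, -, rfl⟩ := Real.ofDigits_SurjOn hP hy
    exact ⟨φ ω, ⟨ω, rfl⟩, hg ω⟩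
  have hold : HolderOnWith ((R / r) ^ (s : ℝ)).toNNReal s g (range φ) := by
    rintro _ ⟨ω, rfl⟩ _ ⟨ω', rfl⟩
    by_cases hω : ω = ω'
    · simp [hω]
    obtain ⟨j, hj, hj'⟩ := hne ω ω' hω
    have h1 := hφ ω ω' j hj hj'
    have h2 := Real.abs_ofDigits_sub_ofDigits_le hj
    rw [hg, hg, edist_dist, edist_dist, ENNReal.ofReal_rpow_of_nonneg dist_nonneg s.coe_nonneg,
      ← ENNReal.ofReal, ← ENNReal.ofReal_mul (by positivity)]
    apply ENNReal.ofReal_le_ofReal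
    rw [Real.dist_eq]
    refine h2.trans ?_
    rw [← Real.mul_rpow (by positivity) dist_nonneg]
    have h3 : (R ^ j)⁻¹ ≤ R / r * dist (φ ω) (φ ω') := by
      calc (R ^ j)⁻¹ = R / r * (r / R ^ (j + 1)) := by field_simp; ring
        _ ≤ _ := by gcongr
    refine le_trans ?_ (Real.rpow_le_rpow (by positivity) h3 s.coe_nonneg)
    rw [Real.inv_rpow (by positivity), ← Real.rpow_natCast R, ← Real.rpow_mul hR0.le, mul_comm,
      Real.rpow_mul hR0.le, Real.rpow_natCast]
    gcongr
  have h1 : (1 : ENNReal) ≤ dimH (Icc (0 : ℝ) 1) := by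
    rw [Real.dimH_of_nonempty_interior (by simp)]
    simp
  have h2 := (h1.trans (dimH_mono himg)).trans (hold.dimH_image_le hs)
  rwa [ENNReal.le_div_iff_mul_le (by simp [hs.ne']) (by simp), one_mul] at h2

/-- The limit set of a tree of nested closed balls in which every ball has `P` well-separated
children, smaller by a factor `R`, has Hausdorff dimension at least `log P / log R`. -/
theorem le_dimH_of_separated_subdivision {X : Type*} [MetricSpace X] [CompleteSpace X] {R r : ℝ}
    (hR : 1 < R) (hr : 0 < r) {P : ℕ} (hP : 1 < P) {s : NNReal} (hs : 0 < s)
    (hPs : R ^ (s : ℝ) ≤ P) (S : ℕ → Set X) (x₀ : X)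
    (h : ∀ j x, ∃ f : Fin P → X,
      (∀ i, closedBall (f i) (r / R ^ (j + 1)) ⊆ closedBall x (r / R ^ j) ∩ S j) ∧
      ∀ i i', i ≠ i' → 3 * (r / R ^ (j + 1)) ≤ dist (f i) (f i')) :
    (s : ENNReal) ≤ dimH (closedBall x₀ r ∩ ⋂ j, S j) := by
  have hR0 : 0 < R := by linarith
  choose F hF hsep using h
  have hball : ∀ ω j, closedBall (treeCenter F x₀ ω (j + 1)) (r / R ^ (j + 1)) ⊆
      closedBall (treeCenter F x₀ ω j) (r / R ^ j) ∩ S j := fun ω j => hF j _ _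
  have hanti : ∀ ω, Antitone fun j => closedBall (treeCenter F x₀ ω j) (r / R ^ j) :=
    fun ω => antitone_nat_of_succ_le fun j => (hball ω j).trans inter_subset_left
  have hcauchy : ∀ ω, CauchySeq (treeCenter F x₀ ω) := by
    intro ω
    refine cauchySeq_of_le_geometric R⁻¹ r (inv_lt_one_of_one_lt₀ hR) fun j => ?_
    have := ((hball ω j) (mem_closedBall_self (by positivity))).1
    rw [mem_closedBall, dist_comm] at this
    simpa [div_eq_mul_inv] using this
  choose φ hφ using fun ω => cauchySeq_tendsto_of_complete (hcauchy ω)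
  have hmem : ∀ ω j, φ ω ∈ closedBall (treeCenter F x₀ ω j) (r / R ^ j) := by
    intro ω j
    refine isClosed_closedBall.mem_of_tendsto (hφ ω) ?_
    filter_upwards [Filter.eventually_ge_atTop j] with i hi
    exact hanti ω hi (mem_closedBall_self (by positivity))
  refine (le_dimH_range_of_separated hR hr hP hs hPs φ fun ω ω' j hj hj' => ?_).trans
    (dimH_mono ?_)
  · have h1 := hmem ω (j + 1)
    have h2 := hmem ω' (j + 1)
    have h3 := hsep j (treeCenter F x₀ ω j) _ _ hj'
    rw [mem_closedBall] at h1 h2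
    have e1 : F j (treeCenter F x₀ ω j) (ω j) = treeCenter F x₀ ω (j + 1) := rfl
    have e2 : F j (treeCenter F x₀ ω j) (ω' j) = treeCenter F x₀ ω' (j + 1) := by
      rw [treeCenter_congr F x₀ hj]; rfl
    rw [e1, e2] at h3
    have h4 := dist_triangle4 (treeCenter F x₀ ω (j + 1)) (φ ω) (φ ω')
      (treeCenter F x₀ ω' (j + 1))
    rw [dist_comm _ (φ ω)] at h4
    linarith
  · rintro _ ⟨ω, rfl⟩
    refine ⟨by simpa [treeCenter] using hmem ω 0, mem_iInter.2 fun j => ?_⟩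
    exact (hball ω j (hmem ω (j + 1))).2

/-- A grid with `N ^ n` points, of which at most `m * N ^ (n - 1)` are discarded, keeps more than
`(A * N) ^ s` points when `s < n`, even if `m` grows like `N ^ δ` for some `δ < 1`. -/
theorem exists_grid_parameters {n : ℕ} (hn : 1 ≤ n) {A s δ m₀ : ℝ} (hA : 1 ≤ A)
    (hsn : s < n) (hδ : δ < 1) :
    ∃ N P m : ℕ, 1 < N ∧ 1 < P ∧ (A * N) ^ s ≤ P ∧ m₀ + (A * N) ^ δ ≤ m ∧
      P + m * N ^ (n - 1) ≤ N ^ n := by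
  have hlim : Filter.Tendsto (fun x : ℝ => A ^ s * x ^ (-(n - s)) + 3 * x ^ (-(n : ℝ)) +
      (|m₀| + 1) * x ^ (-(1 : ℝ)) + A ^ δ * x ^ (-(1 - δ))) Filter.atTop (nhds 0) := by
    have hn' : (0 : ℝ) < n := by exact_mod_cast hn
    have := ((((tendsto_rpow_neg_atTop (sub_pos.2 hsn)).const_mul (A ^ s)).add
      ((tendsto_rpow_neg_atTop hn').const_mul 3)).add
      ((tendsto_rpow_neg_atTop one_pos).const_mul (|m₀| + 1))).add
      ((tendsto_rpow_neg_atTop (sub_pos.2 hδ)).const_mul (A ^ δ))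
    simpa using this
  obtain ⟨N, hN, hN1⟩ := ((tendsto_natCast_atTop_atTop.eventually
    (hlim.eventually (gt_mem_nhds one_pos))).and (Filter.eventually_gt_atTop 1)).exists
  have hx : (0 : ℝ) < N := by exact_mod_cast (by omega : 0 < N)
  have hA0 : 0 < A := by linarith
  refine ⟨N, ⌈(A * N) ^ s⌉₊ + 1, ⌈|m₀| + (A * N) ^ δ⌉₊, hN1, ?_, ?_, ?_, ?_⟩
  · have : 0 < ⌈(A * N) ^ s⌉₊ := Nat.ceil_pos.2 (by positivity)
    omega
  · push_cast
    linarith [Nat.le_ceil ((A * N) ^ s)]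
  · linarith [Nat.le_ceil (|m₀| + (A * N) ^ δ), le_abs_self m₀]
  · have h1 := (Nat.ceil_lt_add_one (a := (A * N) ^ s) (by positivity)).le
    have h2 := (Nat.ceil_lt_add_one (a := |m₀| + (A * N) ^ δ) (by positivity)).le
    rify
    have h3 : (⌈|m₀| + (A * N) ^ δ⌉₊ : ℝ) * (N : ℝ) ^ (n - 1) ≤
        (|m₀| + (A * N) ^ δ + 1) * (N : ℝ) ^ (n - 1) := by gcongr
    have h4 := mul_le_mul_of_nonneg_right hN.le (pow_nonneg hx.le n)
    have e : ∀ a : ℝ, (N : ℝ) ^ a * (N : ℝ) ^ n = (N : ℝ) ^ (a + n) := fun a => by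
      rw [Real.rpow_add hx, Real.rpow_natCast]
    have en : (N : ℝ) ^ (n - 1) * N = N ^ n := by rw [← pow_succ]; congr 1; omega
    have e0 : (N : ℝ) ^ (-(n : ℝ)) * (N : ℝ) ^ n = 1 := by rw [e]; simp
    have e1 : (N : ℝ) ^ (-((n : ℝ) - s)) * (N : ℝ) ^ n = N ^ s := by rw [e]; congr 1; ring
    have e2 : (N : ℝ) ^ (-(1 : ℝ)) * (N : ℝ) ^ n = N ^ (n - 1) := by
      rw [← en, Real.rpow_neg_one]; field_simp
    have e3 : (N : ℝ) ^ (-(1 - δ)) * (N : ℝ) ^ n = N ^ δ * N ^ (n - 1) := by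
      rw [← en, neg_sub, Real.rpow_sub hx, Real.rpow_one]; field_simp
    rw [add_mul, add_mul, add_mul, mul_assoc, mul_assoc, mul_assoc, mul_assoc, e0, e1, e2, e3] at h4
    simp only [Real.mul_rpow hA0.le hx.le] at h1 h3 ⊢
    linarith

/-- Some standard basis vector is stretched by `M` by a factor comparable to `‖M‖`. -/
theorem exists_norm_le_mul_norm_apply_single {n : ℕ} (hn : 1 ≤ n)
    (M : EuclideanSpace ℝ (Fin n) →L[ℝ] EuclideanSpace ℝ (Fin n)) :
    ∃ l, ‖M‖ ≤ n * ‖M (EuclideanSpace.single l 1)‖ := by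
  have : Nonempty (Fin n) := ⟨⟨0, hn⟩⟩
  obtain ⟨l, -, hl⟩ := Finset.exists_max_image Finset.univ
    (fun l => ‖M (EuclideanSpace.single l 1)‖) Finset.univ_nonempty
  refine ⟨l, M.opNorm_le_bound (by positivity) fun x => ?_⟩
  have hx : x = ∑ j, x j • EuclideanSpace.single j (1 : ℝ) := by
    simpa using ((EuclideanSpace.basisFun (Fin n) ℝ).sum_repr x).symm
  calc ‖M x‖ = ‖∑ j, x j • M (EuclideanSpace.single j (1 : ℝ))‖ := by
        conv_lhs => rw [hx]
        simp only [map_sum, map_smul]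
    _ ≤ ∑ j, ‖x j • M (EuclideanSpace.single j (1 : ℝ))‖ := norm_sum_le _ _
    _ ≤ ∑ _j : Fin n, ‖x‖ * ‖M (EuclideanSpace.single l 1)‖ := by
        refine Finset.sum_le_sum fun j _ => ?_
        rw [norm_smul]
        exact mul_le_mul (PiLp.norm_apply_le x j) (hl j (Finset.mem_univ _)) (norm_nonneg _)
          (norm_nonneg _)
    _ = n * ‖M (EuclideanSpace.single l 1)‖ * ‖x‖ := by
        simp; ring

theorem euclidean_norm_le_of_forall_abs_le {n : ℕ} {x : EuclideanSpace ℝ (Fin n)} {a : ℝ}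
    (h : ∀ j, |x j| ≤ a) : ‖x‖ ≤ n * a := by
  have hx : x = ∑ j, x j • EuclideanSpace.single j (1 : ℝ) := by
    simpa using ((EuclideanSpace.basisFun (Fin n) ℝ).sum_repr x).symm
  calc ‖x‖ = ‖∑ j, x j • EuclideanSpace.single j (1 : ℝ)‖ := by rw [← hx]
    _ ≤ ∑ j, ‖x j • EuclideanSpace.single j (1 : ℝ)‖ := norm_sum_le _ _
    _ ≤ ∑ _j : Fin n, a := Finset.sum_le_sum fun j _ => by simpa [norm_smul] using h j
    _ = n * a := by simp

/-- If every set `B k`, `k ∈ W`, is within the ball of radius `R * ρ` about `x` contained in a thin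
neighbourhood of a hyperplane, then this ball contains `P` separated balls of radius `ρ` which avoid
all the `B k`. -/
theorem exists_separated_balls_disjoint {n : ℕ} (hn : 1 ≤ n) {N P m : ℕ} {ι : Type*}
    (W : Finset ι) (hW : W.card ≤ m) (hP : P + m * N ^ (n - 1) ≤ N ^ n) {ρ R : ℝ} (hρ : 0 < ρ)
    (hR : 4 * n ^ 2 * N + 1 ≤ R)
    (M : ι → EuclideanSpace ℝ (Fin n) →L[ℝ] EuclideanSpace ℝ (Fin n))
    (hM : ∀ k ∈ W, 0 < ‖M k‖) (B : ι → Set (EuclideanSpace ℝ (Fin n)))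
    (x : EuclideanSpace ℝ (Fin n))
    (hB : ∀ k ∈ W, ∀ y ∈ B k ∩ closedBall x (R * ρ), ∀ y' ∈ B k ∩ closedBall x (R * ρ),
      ‖M k (y - y')‖ ≤ ‖M k‖ * ρ) :
    ∃ f : Fin P → EuclideanSpace ℝ (Fin n),
      (∀ i, closedBall (f i) ρ ⊆ closedBall x (R * ρ) ∧
        ∀ k ∈ W, Disjoint (closedBall (f i) ρ) (B k)) ∧
      ∀ i i', i ≠ i' → 3 * ρ ≤ dist (f i) (f i') := by
  classical
  have hn1 : (1 : ℝ) ≤ n := by exact_mod_cast hn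
  set d : ℝ := 4 * n * ρ with hd
  have hd0 : 0 < d := by positivity
  let v : (Fin n → Fin N) → EuclideanSpace ℝ (Fin n) := fun i => WithLp.toLp 2 fun j => (i j : ℝ)
  have hv : ∀ i j, v i j = (i j : ℝ) := fun i j => rfl
  let c : (Fin n → Fin N) → EuclideanSpace ℝ (Fin n) := fun i => x + d • v i
  have hc : ∀ i i', c i - c i' = d • (v i - v i') := fun i i' => by simp [c, smul_sub]
  have hone : ∀ a b : Fin N, a ≠ b → 1 ≤ |(a : ℝ) - (b : ℝ)| := by
    intro a b hab
    have h : ((a : ℕ) : ℤ) - ((b : ℕ) : ℤ) ≠ 0 := by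
      intro h
      exact hab (Fin.ext (by omega))
    exact_mod_cast Int.one_le_abs h
  have hsub : ∀ i, closedBall (c i) ρ ⊆ closedBall x (R * ρ) := by
    intro i
    apply closedBall_subset_closedBall'
    have h1 : ‖v i‖ ≤ n * N := euclidean_norm_le_of_forall_abs_le fun j => by
      rw [hv, abs_of_nonneg (by positivity)]
      exact Nat.cast_le.2 (i j).2.le
    have h2 : dist (c i) x ≤ d * (n * N) := by
      rw [dist_eq_norm]
      simp only [c, add_sub_cancel_left, norm_smul, Real.norm_eq_abs, abs_of_pos hd0]
      gcongr
    have h3 := mul_le_mul_of_nonneg_right hR hρ.le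
    rw [hd] at h2
    linarith
  have hsep : ∀ i i', i ≠ i' → 3 * ρ ≤ dist (c i) (c i') := by
    intro i i' hi
    obtain ⟨j, hj⟩ := Function.ne_iff.1 hi
    have h1 : 1 ≤ ‖v i - v i'‖ :=
      (hone _ _ hj).trans (PiLp.norm_apply_le (v i - v i') j)
    rw [dist_eq_norm, hc, norm_smul, Real.norm_eq_abs, abs_of_pos hd0]
    nlinarith
  let bad : ι → Finset (Fin n → Fin N) := fun k =>
    {i | ¬ Disjoint (closedBall (c i) ρ) (B k)}
  have hbad : ∀ k ∈ W, (bad k).card ≤ N ^ (n - 1) := by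
    intro k hk
    obtain ⟨l, hl⟩ := exists_norm_le_mul_norm_apply_single hn (M k)
    have hcard : Fintype.card ({j : Fin n // j ≠ l} → Fin N) = N ^ (n - 1) := by simp
    rw [← hcard, ← Finset.card_univ]
    refine Finset.card_le_card_of_injOn (fun i j => i j) (fun _ _ => Finset.mem_coe.2
      (Finset.mem_univ _)) ?_
    intro i hi i' hi' hii
    have hoff : ∀ j ≠ l, i j = i' j := fun j hj => congrFun hii ⟨j, hj⟩
    by_contra hne
    have hl' : i l ≠ i' l := fun h => hne <| funext fun j => by
      by_cases hj : j = l
      · rw [hj, h]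
      · exact hoff j hj
    simp only [bad, Finset.coe_filter, Finset.mem_univ, true_and, mem_ofPred_eq,
      Set.not_disjoint_iff] at hi hi'
    obtain ⟨y, hy, hyB⟩ := hi
    obtain ⟨y', hy', hyB'⟩ := hi'
    have h1 := hB k hk y ⟨hyB, hsub i hy⟩ y' ⟨hyB', hsub i' hy'⟩
    have h2 : ‖M k (c i - y)‖ ≤ ‖M k‖ * ρ := (M k).le_opNorm_of_le (by
      rwa [mem_closedBall, dist_comm, dist_eq_norm] at hy)
    have h3 : ‖M k (y' - c i')‖ ≤ ‖M k‖ * ρ := (M k).le_opNorm_of_le (by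
      rwa [mem_closedBall, dist_eq_norm] at hy')
    have h4 : c i - c i' = (d * ((i l : ℝ) - (i' l : ℝ))) • EuclideanSpace.single l 1 := by
      rw [hc]
      ext j
      by_cases hj : j = l
      · subst hj; simp [hv]
      · simp [hv, hoff j hj, hj]
    have h5 : ‖M k (c i - c i')‖ ≤ 3 * (‖M k‖ * ρ) := by
      have : M k (c i - c i') = M k (c i - y) + M k (y - y') + M k (y' - c i') := by
        rw [← map_add, ← map_add]; congr 1; abel
      rw [this]
      linarith [norm_add₃_le (a := M k (c i - y)) (b := M k (y - y')) (c := M k (y' - c i'))]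
    rw [h4, map_smul, norm_smul, Real.norm_eq_abs, abs_mul, abs_of_pos hd0] at h5
    have h6 : d * 1 * ‖M k (EuclideanSpace.single l 1)‖ ≤ 3 * (‖M k‖ * ρ) := by
      refine le_trans ?_ h5
      gcongr
      exact hone _ _ hl'
    have h7 := mul_le_mul_of_nonneg_right hl hρ.le
    have h8 := mul_pos (hM k hk) hρ
    rw [hd] at h6
    linarith
  have hbadW : (W.biUnion bad).card ≤ m * N ^ (n - 1) :=
    (Finset.card_biUnion_le_card_mul _ _ _ hbad).trans (Nat.mul_le_mul_right _ hW)
  have hgood : P ≤ (W.biUnion bad)ᶜ.card := by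
    rw [Finset.card_compl, Fintype.card_fun, Fintype.card_fin, Fintype.card_fin]
    omega
  obtain ⟨T, hT, hTP⟩ := Finset.exists_subset_card_eq hgood
  let e := (T.equivFinOfCardEq hTP).symm
  refine ⟨fun i => c (e i), fun i => ⟨hsub _, fun k hk => ?_⟩, fun i i' hi => hsep _ _ fun h =>
    hi (e.injective (Subtype.ext h))⟩
  have := hT (e i).2
  simp only [bad, Finset.mem_compl, Finset.mem_biUnion, Finset.mem_filter, Finset.mem_univ,
    true_and, not_exists, not_and, not_not] at this
  exact this k hk

/-- Two points of a ball which `M` maps close to a separated set `Z` are close to each other in the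
direction most stretched by `M`, provided that the image of the ball is smaller than the
separation of `Z`. -/
theorem norm_map_sub_le_of_infDist_lt {E : Type*} [NormedAddCommGroup E] [NormedSpace ℝ E]
    {M : E →L[ℝ] E} {Z : Set E} (hZ : Z.Nonempty) {τ c r : ℝ}
    (hsep : ∀ z₁ ∈ Z, ∀ z₂ ∈ Z, z₁ ≠ z₂ → τ ≤ dist z₁ z₂) (hτ : 2 * (‖M‖ * r) + 2 * c ≤ τ)
    {x y y' : E} (hy : y ∈ closedBall x r) (hy' : y' ∈ closedBall x r)
    (hyZ : infDist (M y) Z < c) (hyZ' : infDist (M y') Z < c) : ‖M (y - y')‖ ≤ 2 * c := by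
  obtain ⟨z, hz, hyz⟩ := (infDist_lt_iff hZ).1 hyZ
  obtain ⟨z', hz', hyz'⟩ := (infDist_lt_iff hZ).1 hyZ'
  have h1 : dist (M y) (M y') ≤ 2 * (‖M‖ * r) := by
    have : ‖M (y - y')‖ ≤ ‖M‖ * (2 * r) := by
      apply M.le_opNorm_of_le
      rw [← dist_eq_norm]
      rw [mem_closedBall] at hy hy'
      linarith [dist_triangle_right y y' x]
    rw [dist_eq_norm, ← map_sub]
    linarith
  have h2 : z = z' := by
    by_contra hne
    have := hsep z hz z' hz' hne
    have := dist_triangle4 z (M y) (M y') z'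
    rw [dist_comm z (M y)] at this
    linarith
  subst h2
  rw [map_sub, ← dist_eq_norm]
  linarith [dist_triangle_right (M y) (M y') z]

theorem exists_window_of_le {α : Type*} [LinearOrder α] {a : ℕ → α} {x : α} (h : ∃ j, x ≤ a j) :
    ∃ j, x ≤ a j ∧ ∀ i, j = i + 1 → a i < x := by
  classical
  refine ⟨Nat.find h, Nat.find_spec h, fun i hi => ?_⟩
  exact not_le.1 (Nat.find_min h (by omega))

theorem finite_and_ncard_le_of_encard_le {α : Type*} {A : Set α} {a : ℝ} {m : ℕ} (ha : a ≤ m)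
    (h : (A.encard : ENNReal) ≤ ENNReal.ofReal a) : A.Finite ∧ A.ncard ≤ m := by
  have h1 : (A.encard : ENNReal) ≤ ((m : ℕ∞) : ENNReal) :=
    h.trans (by simpa using ENNReal.ofReal_le_ofReal ha)
  have h2 : A.encard ≤ m := by exact_mod_cast h1
  have hf : A.Finite := finite_of_encard_le_coe h2
  refine ⟨hf, ?_⟩
  rw [← hf.cast_ncard_eq] at h2
  exact_mod_cast h2

/-- Let `(M_k)` be a sequence of invertible matrices with
operator norms `t_k`, `(Z_k)` nonempty `τ_k`-separated sets, such that the set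
`{log(t_k/τ_k)}` is discrete and bounded below and, for some `δ̄ < 1`, each
window `(t−b, t]` contains at most `e^{δ̄ b}` of the values `log(t_k/τ_k)`
(counted with multiplicity in `k`).  Then the set
`E = {x : ∃ c > 0, dist(M_k x, Z_k) ≥ c τ_k ∀k}` is thick: its intersection
with every nonempty open set has Hausdorff dimension `n`. -/
theorem stmt16 (n : ℕ) (hn : 1 ≤ n)
    (M : ℕ → (EuclideanSpace ℝ (Fin n) →L[ℝ] EuclideanSpace ℝ (Fin n)))
    (hM : ∀ k, Function.Bijective (M k))
    (τ : ℕ → ℝ) (hτ : ∀ k, 0 < τ k)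
    (Z : ℕ → Set (EuclideanSpace ℝ (Fin n)))
    (hZne : ∀ k, (Z k).Nonempty)
    (hZsep : ∀ k, ∀ z₁ ∈ Z k, ∀ z₂ ∈ Z k, z₁ ≠ z₂ → τ k ≤ dist z₁ z₂)
    -- {log(t_k/τ_k)} is discrete and bounded below
    (hdisc : ∀ t : ℝ, {x : ℝ | (∃ k, Real.log (‖M k‖ / τ k) = x) ∧ x ≤ t}.Finite)
    (δbar : ℝ) (hδbar : δbar < 1)
    -- counting condition with multiplicity
    (hcard : ∀ t b : ℝ, 0 < b →
      {k : ℕ | t - b < Real.log (‖M k‖ / τ k) ∧ Real.log (‖M k‖ / τ k) ≤ t}.encard ≤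
        ENNReal.ofReal (Real.exp (δbar * b))) :
    ∀ U : Set (EuclideanSpace ℝ (Fin n)), IsOpen U → U.Nonempty →
      dimH ({x : EuclideanSpace ℝ (Fin n) | ∃ c : ℝ, 0 < c ∧
          ∀ k : ℕ, c * τ k ≤ infDist (M k x) (Z k)} ∩ U) = (n : ENNReal) := by
  intro U hU ⟨x₀, hx₀⟩
  have : Nonempty (Fin n) := ⟨⟨0, hn⟩⟩
  have hn1 : (1 : ℝ) ≤ n := by exact_mod_cast hn
  refine le_antisymm ((dimH_mono (subset_univ _)).trans
    (by rw [Real.dimH_univ_eq_finrank]; simp)) ?_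
  refine ENNReal.le_of_forall_nnreal_lt fun s hsn => ?_
  rcases eq_or_ne s 0 with rfl | hs0
  · simp
  have hs : 0 < s := pos_iff_ne_zero.2 hs0
  have hsn' : (s : ℝ) < n := by
    have : s < (n : NNReal) := by exact_mod_cast hsn
    exact_mod_cast this
  obtain ⟨r, hr, hrU⟩ := nhds_basis_closedBall.mem_iff.1 (hU.mem_nhds hx₀)
  have hMpos : ∀ k, 0 < ‖M k‖ := fun k => norm_pos_iff.2 fun h => by
    have := (hM k).1.ne (a₁ := EuclideanSpace.single ⟨0, hn⟩ 1) (a₂ := 0) (by simp)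
    simp [h] at this
  have hexp : ∀ k, Real.exp (Real.log (‖M k‖ / τ k)) * τ k = ‖M k‖ := fun k => by
    rw [Real.exp_log (div_pos (hMpos k) (hτ k)), div_mul_cancel₀ _ (hτ k).ne']
  obtain ⟨L, hL⟩ : ∃ L : ℕ → ℝ, ∀ k, Real.log (‖M k‖ / τ k) = L k := ⟨_, fun _ => rfl⟩
  simp only [hL] at hdisc hcard hexp
  set L₀ : ℝ := Real.log (1 / (4 * r)) with hL₀
  obtain ⟨ℓ, hℓ⟩ := (hdisc L₀).bddBelow
  have hℓ' : ∀ k, L k ≤ L₀ → ℓ ≤ L k := fun k hk => hℓ ⟨⟨k, rfl⟩, hk⟩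
  obtain ⟨N, P, m, hN, hP, hPs, hm, hPm⟩ := exists_grid_parameters hn (A := 5 * (n : ℝ) ^ 2)
    (m₀ := Real.exp (δbar * (|L₀ - ℓ| + 1))) (by nlinarith) hsn' hδbar
  set R : ℝ := 5 * (n : ℝ) ^ 2 * N with hR
  have hN' : (1 : ℝ) < N := by exact_mod_cast hN
  have hnN : 1 < (n : ℝ) ^ 2 * N := one_lt_mul_of_le_of_lt (one_le_pow₀ hn1) hN'
  have hR1 : 1 < R := by nlinarith
  have hR0 : 0 < R := by linarith
  set a : ℕ → ℝ := fun j => L₀ + j * Real.log R with ha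
  have hlogR : 0 < Real.log R := Real.log_pos hR1
  have hexpa : ∀ j, Real.exp (a j) = R ^ j / (4 * r) := fun j => by
    rw [ha, hL₀]
    simp only
    rw [Real.exp_add, Real.exp_log (by positivity), ← Real.log_pow, Real.exp_log (by positivity)]
    ring
  let W : ℕ → Set ℕ := fun j => {k | L k ≤ a j ∧ ∀ i, j = i + 1 → a i < L k}
  have hWall : ∀ k, ∃ j, k ∈ W j := by
    intro k
    apply exists_window_of_le
    obtain ⟨j, hj⟩ := exists_nat_ge ((L k - L₀) / Real.log R)
    refine ⟨j, ?_⟩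
    rw [div_le_iff₀ hlogR] at hj
    simp only [ha]
    linarith
  have hWm : ∀ j, (W j).Finite ∧ (W j).ncard ≤ m := by
    rintro (_ | i)
    · have hsub : W 0 ⊆ {k | L₀ - (|L₀ - ℓ| + 1) < L k ∧ L k ≤ L₀} := by
        intro k hk
        have h1 : L k ≤ L₀ := by simpa [ha] using hk.1
        exact ⟨by linarith [le_abs_self (L₀ - ℓ), hℓ' k h1], h1⟩
      refine finite_and_ncard_le_of_encard_le (a := Real.exp (δbar * (|L₀ - ℓ| + 1)))
        (le_trans (le_add_of_nonneg_right (by positivity)) hm) ?_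
      refine le_trans ?_ (hcard L₀ (|L₀ - ℓ| + 1) (by positivity))
      exact_mod_cast encard_le_encard hsub
    · have hsub : W (i + 1) ⊆ {k | a (i + 1) - Real.log R < L k ∧ L k ≤ a (i + 1)} := by
        intro k hk
        refine ⟨?_, hk.1⟩
        have := hk.2 i rfl
        simp only [ha] at this ⊢
        push_cast
        linarith
      refine finite_and_ncard_le_of_encard_le (a := Real.exp (δbar * Real.log R)) ?_ ?_
      · rw [mul_comm, ← Real.rpow_def_of_pos hR0]
        exact le_trans (le_add_of_nonneg_left (by positivity)) hm
      · refine le_trans ?_ (hcard (a (i + 1)) (Real.log R) hlogR)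
        exact_mod_cast encard_le_encard hsub
  set c : ℝ := min (min (1 / 4) (1 / (8 * R ^ 2))) (Real.exp ℓ * r / (2 * R)) with hc
  have hc0 : 0 < c := by positivity
  have hc1 : c ≤ 1 / 4 := (min_le_left _ _).trans (min_le_left _ _)
  have hc2 : c ≤ 1 / (8 * R ^ 2) := (min_le_left _ _).trans (min_le_right _ _)
  have hc3 : c ≤ Real.exp ℓ * r / (2 * R) := min_le_right _ _
  have hupper : ∀ j, ∀ k ∈ W j, 2 * (‖M k‖ * (r / R ^ j)) + 2 * (c * τ k) ≤ τ k := by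
    intro j k hk
    have h1 : Real.exp (L k) ≤ R ^ j / (4 * r) := by
      rw [← hexpa]; exact Real.exp_le_exp.2 hk.1
    have h2 : Real.exp (L k) * (r / R ^ j) ≤ 1 / 4 := by
      calc _ ≤ R ^ j / (4 * r) * (r / R ^ j) := by gcongr
        _ = 1 / 4 := by field_simp
    rw [← hexp k]
    nlinarith [hτ k]
  have hlower : ∀ j, ∀ k ∈ W j, 2 * (c * τ k) ≤ ‖M k‖ * (r / R ^ (j + 1)) := by
    intro j k hk
    suffices h : 2 * c ≤ Real.exp (L k) * (r / R ^ (j + 1)) by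
      rw [← hexp k]
      nlinarith [hτ k]
    rcases j with _ | i
    · have h1 : ℓ ≤ L k := hℓ' k (by simpa [ha] using hk.1)
      calc 2 * c ≤ 2 * (Real.exp ℓ * r / (2 * R)) := by gcongr
        _ = Real.exp ℓ * (r / R ^ (0 + 1)) := by field_simp; ring
        _ ≤ _ := by gcongr
    · have h1 : R ^ i / (4 * r) ≤ Real.exp (L k) := by
        rw [← hexpa]; exact Real.exp_le_exp.2 (hk.2 i rfl).le
      calc 2 * c ≤ 2 * (1 / (8 * R ^ 2)) := by gcongr
        _ = R ^ i / (4 * r) * (r / R ^ (i + 1 + 1)) := by field_simp; ring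
        _ ≤ _ := by gcongr
  let S : ℕ → Set (EuclideanSpace ℝ (Fin n)) := fun j =>
    {x | ∀ k ∈ W j, c * τ k ≤ infDist (M k x) (Z k)}
  refine (le_dimH_of_separated_subdivision hR1 hr hP hs hPs S x₀ fun j x => ?_).trans
    (dimH_mono ?_)
  · have hρ : R * (r / R ^ (j + 1)) = r / R ^ j := by field_simp; ring
    obtain ⟨f, hf, hfsep⟩ := exists_separated_balls_disjoint hn (hWm j).1.toFinset (m := m)
      (by rw [← ncard_eq_toFinset_card _ (hWm j).1]; exact (hWm j).2) hPm
      (ρ := r / R ^ (j + 1)) (R := R) (by positivity) (by rw [hR]; linarith) M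
      (fun k _ => hMpos k) (fun k => {y | infDist (M k y) (Z k) < c * τ k}) x (by
        intro k hk y hy y' hy'
        rw [Set.Finite.mem_toFinset] at hk
        rw [hρ] at hy hy'
        exact (norm_map_sub_le_of_infDist_lt (hZne k) (hZsep k) (hupper j k hk) hy.2 hy'.2
          hy.1 hy'.1).trans (hlower j k hk))
    refine ⟨f, fun i => subset_inter ?_ fun y hy k hk => ?_, hfsep⟩
    · rw [← hρ]; exact (hf i).1
    · exact not_lt.1 fun h =>
        Set.disjoint_left.1 ((hf i).2 k ((hWm j).1.mem_toFinset.2 hk)) hy h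
  · rintro x ⟨hx, hxS⟩
    refine ⟨⟨c, hc0, fun k => ?_⟩, hrU hx⟩
    obtain ⟨j, hj⟩ := hWall k
    exact mem_iInter.1 hxS j k hj
end
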